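/- arXiv:1502.03010 — 9 statements merged into one kernel-verified Lean document; each statement's English description precedes it below -/
import Mathlib

section
/- (Theorem 1) A family {E_{b|y}} of POVMs on ℂ^d (settings y in a finite set Y, outcomes b in a finite set B) is jointly measurable if and only if there exist a dimension m, an entanglement-breaking channel from ℂ^d to ℂ^m given by a finite set Λ, a POVM {E_λ} on ℂ^d and density matrices {ρ_λ} on ℂ^m, together with POVMs {Ẽ_{b|y}} on ℂ^m, such that for all b, y: E_{b|y} = ∑_λ tr(Ẽ_{b|y} * ρ_λ) • E_λ (i.e. E_{b|y} is the measurement induced on the channel input by measuring Ẽ_{b|y} on the channel output). -/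
open scoped BigOperators Matrix ComplexOrder Kronecker ComplexConjugate

/-- A POVM on `ℂ^d` with outcome set `B`: positive semidefinite effects summing to `1`. -/
def IsPOVM {d : ℕ} {B : Type} [Fintype B] (E : B → Matrix (Fin d) (Fin d) ℂ) : Prop :=
  (∀ b, (E b).PosSemidef) ∧ ∑ b, E b = 1

/-- A family of POVMs `E b y` (outcome `b`, setting `y`) on `ℂ^d` is jointly measurable
if it arises from a single POVM `G` by classical post-processing. -/
def JointlyMeasurable {d : ℕ} {B Y : Type} [Fintype B] [Fintype Y]
    (E : B → Y → Matrix (Fin d) (Fin d) ℂ) : Prop :=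
  ∃ (n : ℕ) (G : Fin n → Matrix (Fin d) (Fin d) ℂ) (p : B → Y → Fin n → ℝ),
    IsPOVM G ∧ (∀ b y l, 0 ≤ p b y l) ∧ (∀ y l, ∑ b, p b y l = 1) ∧
    (∀ b y, E b y = ∑ l, p b y l • G l)

/-- An assemblage `σ b y` on `ℂ^d` is unsteerable if it admits a local-hidden-state model. -/
def Unsteerable {d : ℕ} {B Y : Type} [Fintype B] [Fintype Y]
    (σ : B → Y → Matrix (Fin d) (Fin d) ℂ) : Prop :=
  ∃ (n : ℕ) (τ : Fin n → Matrix (Fin d) (Fin d) ℂ) (p : B → Y → Fin n → ℝ),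
    (∀ l, (τ l).PosSemidef) ∧ (∑ l, (τ l).trace = 1) ∧
    (∀ b y l, 0 ≤ p b y l) ∧ (∀ y l, ∑ b, p b y l = 1) ∧
    (∀ b y, σ b y = ∑ l, p b y l • τ l)

/-!
When `E b y = ∑ l, tr(Et b y * ρ l) • G l`, the Born probabilities `tr(Et b y * ρ l)` are themselves
a post-processing of `G`. Conversely, a post-processing `p(b|y,l)` of `G` is the Born probability of
the diagonal measurement with entries `p(b|y,·)` in the basis state `|l⟩⟨l|`: the channel writes the
outcome of `G` into a classical register, and the response is read off from it.
-/

/-- A density matrix: a (mixed) state of the quantum system `ℂ^n`, where `n` is any finite index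
type. -/
def IsDensityMatrix {n : Type*} [Fintype n] (ρ : Matrix n n ℂ) : Prop :=
  ρ.PosSemidef ∧ ρ.trace = 1

/-- The Born probability of the effect `A` in the state `ρ`. The real part makes it a real number;
it discards nothing when `A` and `ρ` are positive semidefinite (`ofReal_bornProb`). -/
noncomputable def bornProb {n : Type*} [Fintype n] (A ρ : Matrix n n ℂ) : ℝ :=
  (A * ρ).trace.re

open scoped MatrixOrder in
theorem trace_mul_nonneg_of_posSemidef {n 𝕜 : Type*} [Fintype n] [RCLike 𝕜] {A R : Matrix n n 𝕜}
    (hA : A.PosSemidef) (hR : R.PosSemidef) : 0 ≤ (A * R).trace := by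
  classical
  obtain ⟨C, rfl⟩ := CStarAlgebra.nonneg_iff_eq_star_mul_self.mp hR.nonneg
  calc 0 ≤ (C * A * Cᴴ).trace := (hA.mul_mul_conjTranspose_same C).trace_nonneg
    _ = (A * (Cᴴ * C)).trace := by rw [mul_assoc, Matrix.trace_mul_comm, mul_assoc]

section BornProb

variable {n : Type*} [Fintype n] {A ρ : Matrix n n ℂ}

theorem ofReal_bornProb (hA : A.PosSemidef) (hρ : ρ.PosSemidef) :
    (bornProb A ρ : ℂ) = (A * ρ).trace :=
  (Complex.eq_re_of_ofReal_le (trace_mul_nonneg_of_posSemidef hA hρ)).symm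

theorem bornProb_nonneg (hA : A.PosSemidef) (hρ : ρ.PosSemidef) : 0 ≤ bornProb A ρ :=
  (Complex.nonneg_iff.mp (trace_mul_nonneg_of_posSemidef hA hρ)).1

end BornProb

theorem IsPOVM.bornProb_mem_stdSimplex {m : ℕ} {B : Type} [Fintype B]
    {E : B → Matrix (Fin m) (Fin m) ℂ} {ρ : Matrix (Fin m) (Fin m) ℂ}
    (hE : IsPOVM E) (hρ : IsDensityMatrix ρ) :
    (fun b => bornProb (E b) ρ) ∈ stdSimplex ℝ B := by
  refine ⟨fun b => bornProb_nonneg (hE.1 b) hρ.1, ?_⟩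
  calc ∑ b, bornProb (E b) ρ = ((∑ b, E b) * ρ).trace.re := by
        simp only [bornProb, Finset.sum_mul, Matrix.trace_sum, Complex.re_sum]
    _ = 1 := by rw [hE.2, one_mul, hρ.2, Complex.one_re]

theorem isDensityMatrix_single {n : Type*} [Fintype n] [DecidableEq n] (i : n) :
    IsDensityMatrix (Matrix.single i i (1 : ℂ)) := by
  refine ⟨?_, Matrix.trace_single_eq_same i 1⟩
  rw [← Matrix.diagonal_single]
  exact .diagonal (Pi.single_nonneg.mpr zero_le_one)

theorem trace_diagonal_mul_single {n R : Type*} [Fintype n] [DecidableEq n] [NonAssocSemiring R]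
    (v : n → R) (i : n) :
    (Matrix.diagonal v * Matrix.single i i 1).trace = v i := by
  rw [Matrix.trace_mul_single, Matrix.diagonal_apply_eq, op_smul_eq_mul, mul_one]

theorem isPOVM_diagonal_ofReal_iff {m : ℕ} {B : Type} [Fintype B] {p : B → Fin m → ℝ} :
    IsPOVM (fun b => Matrix.diagonal fun i => (p b i : ℂ)) ↔
      ∀ i, (fun b => p b i) ∈ stdSimplex ℝ B := by
  have sum_diagonal : ∑ b, Matrix.diagonal (fun i => (p b i : ℂ)) =
      Matrix.diagonal fun i => ((∑ b, p b i : ℝ) : ℂ) := by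
    ext i j
    simp [Matrix.sum_apply, Matrix.diagonal_apply]
  simp only [IsPOVM, Matrix.posSemidef_diagonal_iff, Complex.zero_le_real, sum_diagonal,
    Matrix.diagonal_eq_one, funext_iff, Pi.one_apply, Complex.ofReal_eq_one, stdSimplex,
    Set.mem_ofPred_eq, forall_and]
  rw [forall_comm]

/-- Theorem 1: a family of POVMs on `ℂ^d` is jointly measurable iff it is
the family of measurements induced on the input of some entanglement-breaking channel
(given by a POVM `G` and density matrices `ρ`) by POVMs `Et` on the channel output. -/
theorem jointlyMeasurable_iff_induced_by_entanglement_breaking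
    {d : ℕ} {B Y : Type} [Fintype B] [Fintype Y]
    (E : B → Y → Matrix (Fin d) (Fin d) ℂ)
    (hE : ∀ y, IsPOVM fun b => E b y) :
    JointlyMeasurable E ↔
      ∃ (m n : ℕ) (G : Fin n → Matrix (Fin d) (Fin d) ℂ)
        (ρ : Fin n → Matrix (Fin m) (Fin m) ℂ)
        (Et : B → Y → Matrix (Fin m) (Fin m) ℂ),
        IsPOVM G ∧
        (∀ l, (ρ l).PosSemidef ∧ (ρ l).trace = 1) ∧
        (∀ y, IsPOVM fun b => Et b y) ∧
        (∀ b y, E b y = ∑ l, (Et b y * ρ l).trace • G l) := by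
  constructor
  · rintro ⟨n, G, p, hG, hp_nonneg, hp_sum, hEG⟩
    refine ⟨n, n, G, fun l => Matrix.single l l 1,
      fun b y => Matrix.diagonal fun l => (p b y l : ℂ),
      hG, isDensityMatrix_single, fun y => ?_, fun b y => ?_⟩
    · exact isPOVM_diagonal_ofReal_iff.mpr fun l => ⟨fun b => hp_nonneg b y l, hp_sum y l⟩
    · simp only [hEG, trace_diagonal_mul_single, Complex.coe_smul]
  · rintro ⟨m, n, G, ρ, Et, hG, hρ, hEt, hEG⟩
    have hp (y l) : (fun b => bornProb (Et b y) (ρ l)) ∈ stdSimplex ℝ B :=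
      (hEt y).bornProb_mem_stdSimplex (hρ l)
    refine ⟨n, G, fun b y l => bornProb (Et b y) (ρ l), hG, fun b y l => (hp y l).1 b,
      fun y l => (hp y l).2, fun b y => ?_⟩
    simp only [hEG, ← Complex.coe_smul, ofReal_bornProb ((hEt y).1 b) (hρ _).1]
end

section
/- Let {F_{b|y}} be a family of Hermitian matrices on ℂ^d (settings y in a finite set Y, outcomes b in a finite set B) and L ∈ ℝ such that ∑_{b,y} Re tr(F_{b|y} * σ_{b|y}) ≤ L for every unsteerable assemblage {σ_{b|y}} on ℂ^d. Then ∑_{b,y} Re tr(F_{b|y} * E_{b|y}) ≤ d * L for every jointly measurable family of POVMs {E_{b|y}} on ℂ^d (with the same index sets). -/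
open scoped BigOperators Matrix ComplexOrder Kronecker ComplexConjugate

/-!
If `E` is jointly measurable with parent POVM `G`, then `(1/d) E` is unsteerable: the operators
`(1/d) G_λ` are subnormalised hidden states whose traces sum to `tr (1/d) = 1`, and the response
functions stay the same. A linear functional on assemblages therefore takes on `E` the value
`d` times its value on an unsteerable assemblage.
-/

section

variable {d d' : ℕ} {B Y : Type} [Fintype B] [Fintype Y]

theorem JointlyMeasurable.unsteerable_map {E : B → Y → Matrix (Fin d) (Fin d) ℂ}
    (hE : JointlyMeasurable E)
    (Φ : Matrix (Fin d) (Fin d) ℂ →ₗ[ℝ] Matrix (Fin d') (Fin d') ℂ)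
    (Φ_pos : ∀ M, M.PosSemidef → (Φ M).PosSemidef) (trace_Φ_one : (Φ 1).trace = 1) :
    Unsteerable fun b y => Φ (E b y) := by
  obtain ⟨n, G, p, ⟨G_pos, sum_G⟩, p_nonneg, sum_p, E_eq⟩ := hE
  refine ⟨n, fun l => Φ (G l), p, fun l => Φ_pos _ (G_pos l), ?_, p_nonneg, sum_p, fun b y => ?_⟩
  · rw [← Matrix.trace_sum, ← map_sum, sum_G, trace_Φ_one]
  · simp only [E_eq, map_sum, map_smul]

theorem JointlyMeasurable.unsteerable_inv_smul [NeZero d] {E : B → Y → Matrix (Fin d) (Fin d) ℂ}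
    (hE : JointlyMeasurable E) : Unsteerable ((d : ℝ)⁻¹ • E) := by
  have inv_d_nonneg : 0 ≤ (d : ℝ)⁻¹ := by positivity
  refine hE.unsteerable_map ((d : ℝ)⁻¹ • LinearMap.id) (fun M hM => hM.smul inv_d_nonneg) ?_
  simp [Matrix.trace_smul]

/-- The linear functional `σ ↦ ∑_{b,y} Re tr(F_{b|y} σ_{b|y})` on the left-hand side of a steering
inequality. It is only `ℝ`-linear, and is defined on all families of matrices so that it can be
evaluated on assemblages and on families of POVMs alike. -/
def steeringFunctional (F : B → Y → Matrix (Fin d) (Fin d) ℂ) :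
    (B → Y → Matrix (Fin d) (Fin d) ℂ) →ₗ[ℝ] ℝ where
  toFun σ := ∑ b, ∑ y, ((F b y * σ b y).trace).re
  map_add' σ τ := by simp [Matrix.mul_add, Finset.sum_add_distrib]
  map_smul' c σ := by simp [Matrix.trace_smul, Finset.mul_sum]

theorem steering_inequality_to_joint_measurability_inequality_general
    (φ : (B → Y → Matrix (Fin d) (Fin d) ℂ) →ₗ[ℝ] ℝ) {L : ℝ}
    (hL : ∀ σ, Unsteerable σ → φ σ ≤ L)
    {E : B → Y → Matrix (Fin d) (Fin d) ℂ} (hE : JointlyMeasurable E) :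
    φ E ≤ d * L := by
  rcases eq_zero_or_neZero d with rfl | hd
  · simp [Subsingleton.elim E 0]
  · have d_ne_zero : (d : ℝ) ≠ 0 := NeZero.ne _
    calc
      φ E = d * φ ((d : ℝ)⁻¹ • E) := by rw [map_smul, smul_eq_mul, mul_inv_cancel_left₀ d_ne_zero]
      _ ≤ d * L := by gcongr; exact hL _ hE.unsteerable_inv_smul

end

/-- a linear EPR-steering inequality with bound `L` yields a linear
joint-measurability inequality with bound `d * L`. -/
theorem steering_inequality_to_joint_measurability_inequality
    {d : ℕ} {B Y : Type} [Fintype B] [Fintype Y]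
    (F : B → Y → Matrix (Fin d) (Fin d) ℂ)
    (hF : ∀ b y, (F b y).IsHermitian) (L : ℝ)
    (hL : ∀ σ : B → Y → Matrix (Fin d) (Fin d) ℂ, Unsteerable σ →
      ∑ b, ∑ y, ((F b y * σ b y).trace).re ≤ L)
    (E : B → Y → Matrix (Fin d) (Fin d) ℂ)
    (hE : ∀ y, IsPOVM fun b => E b y)
    (hJM : JointlyMeasurable E) :
    ∑ b, ∑ y, ((F b y * E b y).trace).re ≤ d * L :=
  steering_inequality_to_joint_measurability_inequality_general (steeringFunctional F) hL hJM
end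

section
/- If a family of POVMs {E_{b|y}} on ℂ^d (settings y in a finite set Y, outcomes b in a finite set B) is not jointly measurable, then it violates a linear joint-measurability inequality: there exist Hermitian matrices {F_{b|y}} on ℂ^d and L ∈ ℝ such that ∑_{b,y} Re tr(F_{b|y} * G_{b|y}) ≤ L for every jointly measurable family of POVMs {G_{b|y}} on ℂ^d with the same index sets, while ∑_{b,y} Re tr(F_{b|y} * E_{b|y}) > L. -/
open scoped BigOperators Matrix ComplexOrder Kronecker ComplexConjugate

/-!
A family is jointly measurable iff it consists of the marginals of a single POVM indexed by the
deterministic strategies `Y → B`. The jointly measurable families are therefore a linear image of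
the compact convex set of POVMs with a fixed outcome set, and a family outside this compact convex
set is separated from it by Hahn–Banach. The separating functional is a sum of functionals
`X ↦ tr (A X)`, and on Hermitian `X` the real part of `tr (A X)` only sees the Hermitian part of
`A`.
-/

open Finset in
theorem sum_prod_apply_filter_eq {ι R : Type*} {κ : ι → Type*} [Fintype ι] [DecidableEq ι]
    [∀ i, Fintype (κ i)] [∀ i, DecidableEq (κ i)] [CommSemiring R] (p : ∀ i, κ i → R)
    (hp : ∀ i, ∑ c, p i c = 1) (i : ι) (c : κ i) :
    ∑ f : ∀ j, κ j with f i = c, ∏ j, p j (f j) = p i c := by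
  rw [← Fintype.piFinset_univ,
    ← Fintype.piFinset_update_singleton_eq_filter_piFinset_eq _ i (mem_univ c),
    ← prod_univ_sum, Fintype.prod_eq_single i fun j hj => by simp [hj, hp]]
  simp

section Marginals

variable {B Y : Type*} [Fintype B] [DecidableEq B] [Fintype Y] [DecidableEq Y]

/-- The marginals of an `M`-valued weight `H` on deterministic strategies `Y → B`: the value at
outcome `b` and setting `y` is the total weight of the strategies answering `b` to `y`. When `H` is
a POVM, this is the family of measurements obtained from `H` by deterministic post-processing. -/
def marginals (R : Type*) {M : Type*} [Semiring R] [AddCommMonoid M] [Module R M] :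
    ((Y → B) → M) →ₗ[R] B → Y → M where
  toFun H b y := ∑ f with f y = b, H f
  map_add' H K := by ext; simp [Finset.sum_add_distrib]
  map_smul' c H := by ext; simp [Finset.smul_sum]

theorem marginals_apply (R : Type*) {M : Type*} [Semiring R] [AddCommMonoid M] [Module R M]
    (H : (Y → B) → M) (b : B) (y : Y) : marginals R H b y = ∑ f with f y = b, H f :=
  rfl

end Marginals

section JointMeasurability

variable {d : ℕ} {B Y : Type} [Fintype B] [Fintype Y]

theorem JointlyMeasurable.posSemidef {E : B → Y → Matrix (Fin d) (Fin d) ℂ}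
    (hE : JointlyMeasurable E) (b : B) (y : Y) : (E b y).PosSemidef := by
  obtain ⟨n, G, p, hG, hp, -, hEG⟩ := hE
  rw [hEG]
  exact Matrix.posSemidef_sum _ fun l _ => (hG.1 l).smul (hp b y l)

variable [DecidableEq B] [DecidableEq Y]

theorem IsPOVM.jointlyMeasurable_marginals {H : (Y → B) → Matrix (Fin d) (Fin d) ℂ}
    (hH : IsPOVM H) : JointlyMeasurable (marginals ℝ H) := by
  let e := (Fintype.equivFin (Y → B)).symm
  refine ⟨Fintype.card (Y → B), H ∘ e, fun b y l => if e l y = b then 1 else 0,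
    ⟨fun l => hH.1 (e l), (e.sum_comp H).trans hH.2⟩, fun b y l => by positivity,
    fun y l => by simp, fun b y => ?_⟩
  simp only [marginals_apply, Function.comp_apply, ite_smul, one_smul, zero_smul]
  rw [e.sum_comp fun f => if f y = b then H f else 0, Finset.sum_filter]

-- Given the hidden variable `l`, the settings are answered independently: the strategy `f` gets
-- probability `∏ y, p (f y) y l`.
theorem JointlyMeasurable.exists_marginals_eq {E : B → Y → Matrix (Fin d) (Fin d) ℂ}
    (hE : JointlyMeasurable E) :
    ∃ H : (Y → B) → Matrix (Fin d) (Fin d) ℂ, IsPOVM H ∧ marginals ℝ H = E := by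
  obtain ⟨n, G, p, ⟨hG, hG1⟩, hp, hp1, hEG⟩ := hE
  refine ⟨fun f => ∑ l, (∏ y, p (f y) y l) • G l, ⟨fun f => ?_, ?_⟩, ?_⟩
  · exact Matrix.posSemidef_sum _ fun l _ =>
      (hG l).smul (Finset.prod_nonneg fun y _ => hp (f y) y l)
  · have prob_total (l : Fin n) : ∑ f : Y → B, ∏ y, p (f y) y l = 1 := by
      rw [← Fintype.prod_sum fun y b => p b y l]
      simp only [hp1, Finset.prod_const_one]
    rw [Finset.sum_comm, ← hG1]
    simp only [← Finset.sum_smul, prob_total, one_smul]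
  · funext b y
    rw [marginals_apply, Finset.sum_comm, hEG]
    simp only [← Finset.sum_smul,
      sum_prod_apply_filter_eq (fun y b => p b y _) (fun y => hp1 y _) y b]

theorem setOf_jointlyMeasurable_eq_image_marginals :
    {E : B → Y → Matrix (Fin d) (Fin d) ℂ | JointlyMeasurable E} =
      marginals ℝ '' {H | IsPOVM H} :=
  Set.Subset.antisymm (fun _ hE => hE.exists_marginals_eq)
    (Set.image_subset_iff.2 fun _ hH => hH.jointlyMeasurable_marginals)

end JointMeasurability

section ConvexCompact

variable {d : ℕ} {B Y : Type} [Fintype B] [Fintype Y]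

theorem convex_setOf_isPOVM : Convex ℝ {H : B → Matrix (Fin d) (Fin d) ℂ | IsPOVM H} := by
  intro H hH K hK s t hs ht hst
  refine ⟨fun b => ((hH.1 b).smul hs).add ((hK.1 b).smul ht), ?_⟩
  simp only [Pi.add_apply, Pi.smul_apply, Finset.sum_add_distrib, ← Finset.smul_sum, hH.2, hK.2,
    ← add_smul, hst, one_smul]

section
open scoped Matrix.Norms.L2Operator MatrixOrder

theorem IsPOVM.norm_apply_le {H : B → Matrix (Fin d) (Fin d) ℂ} (hH : IsPOVM H) (b : B) :
    ‖H b‖ ≤ ‖(1 : Matrix (Fin d) (Fin d) ℂ)‖ := by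
  refine CStarAlgebra.norm_le_norm_of_nonneg_of_le (hH.1 b).nonneg ?_
  rw [← hH.2]
  exact Finset.single_le_sum (fun c _ => (hH.1 c).nonneg) (Finset.mem_univ b)

theorem isClosed_setOf_isPOVM : IsClosed {H : B → Matrix (Fin d) (Fin d) ℂ | IsPOVM H} := by
  simp only [IsPOVM, ← Matrix.nonneg_iff_posSemidef, Set.ofPred_and, Set.ofPred_forall]
  exact (isClosed_iInter fun b => isClosed_le continuous_const (continuous_apply b)).inter
    (isClosed_eq (by fun_prop) continuous_const)

theorem isCompact_setOf_isPOVM : IsCompact {H : B → Matrix (Fin d) (Fin d) ℂ | IsPOVM H} := by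
  have : ProperSpace (Matrix (Fin d) (Fin d) ℂ) := FiniteDimensional.proper ℂ _
  refine (isCompact_closedBall 0 ‖(1 : Matrix (Fin d) (Fin d) ℂ)‖).of_isClosed_subset
    isClosed_setOf_isPOVM fun H hH => ?_
  rw [mem_closedBall_zero_iff, pi_norm_le_iff_of_nonneg (norm_nonneg _)]
  exact hH.norm_apply_le

end

theorem convex_setOf_jointlyMeasurable :
    Convex ℝ {E : B → Y → Matrix (Fin d) (Fin d) ℂ | JointlyMeasurable E} := by
  classical
  rw [setOf_jointlyMeasurable_eq_image_marginals]
  exact convex_setOf_isPOVM.linear_image _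

theorem isCompact_setOf_jointlyMeasurable :
    IsCompact {E : B → Y → Matrix (Fin d) (Fin d) ℂ | JointlyMeasurable E} := by
  classical
  rw [setOf_jointlyMeasurable_eq_image_marginals]
  refine isCompact_setOf_isPOVM.image ?_
  simp only [continuous_pi_iff, marginals_apply]
  fun_prop

end ConvexCompact

section TraceDuality

theorem exists_trace_mul_eq {m n R : Type*} [Fintype m] [Fintype n] [CommSemiring R]
    (f : Matrix m n R →ₗ[R] R) : ∃ A : Matrix n m R, ∀ X, (A * X).trace = f X := by
  classical
  let A : Matrix n m R := Matrix.of fun j i => f (Matrix.single i j 1)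
  have trace_eq : Matrix.traceLinearMap n R R ∘ₗ mulLeftLinearMap n R A = f :=
    Matrix.ext_linearMap R fun i j => by
      ext
      simp [A, Matrix.trace_mul_single]
  exact ⟨A, LinearMap.congr_fun trace_eq⟩

variable {n 𝕜 : Type*} [Fintype n] [RCLike 𝕜]

theorem re_trace_selfAdjointPart_mul (A : Matrix n n 𝕜) {X : Matrix n n 𝕜} (hX : X.IsHermitian) :
    RCLike.re ((selfAdjointPart ℝ A : Matrix n n 𝕜) * X).trace = RCLike.re (A * X).trace := by
  have re_star : RCLike.re (star A * X).trace = RCLike.re (A * X).trace := by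
    rw [Matrix.star_eq_conjTranspose, ← hX.eq, ← Matrix.conjTranspose_mul,
      Matrix.trace_conjTranspose, Matrix.trace_mul_comm, hX.eq]
    exact RCLike.conj_re _
  simp only [selfAdjointPart_apply_coe, Matrix.smul_mul, Matrix.trace_smul, add_mul,
    Matrix.trace_add, RCLike.smul_re, map_add, re_star]
  rw [← two_mul, invOf_mul_cancel_left]

theorem exists_isHermitian_separating {ι κ : Type*} [Fintype ι] [Fintype κ]
    {S : Set (ι → κ → Matrix n n 𝕜)} (hconv : Convex ℝ S) (hclosed : IsClosed S)
    (hS : ∀ G ∈ S, ∀ i k, (G i k).IsHermitian) {E : ι → κ → Matrix n n 𝕜}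
    (hE : ∀ i k, (E i k).IsHermitian) (hES : E ∉ S) :
    ∃ (F : ι → κ → Matrix n n 𝕜) (L : ℝ), (∀ i k, (F i k).IsHermitian) ∧
      (∀ G ∈ S, ∑ i, ∑ k, RCLike.re (F i k * G i k).trace < L) ∧
      L < ∑ i, ∑ k, RCLike.re (F i k * E i k).trace := by
  classical
  have : LocallyConvexSpace ℝ (Matrix n n 𝕜) :=
    inferInstanceAs (LocallyConvexSpace ℝ (n → n → 𝕜))
  obtain ⟨f, L, hfS, hfE⟩ :=
    RCLike.geometric_hahn_banach_closed_point (𝕜 := 𝕜) hconv hclosed hES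
  choose A hA using fun i k => exists_trace_mul_eq
    (f.toLinearMap ∘ₗ LinearMap.single 𝕜 _ i ∘ₗ LinearMap.single 𝕜 (fun _ : κ => _) k)
  have f_eq_sum_trace (X : ι → κ → Matrix n n 𝕜) : f X = ∑ i, ∑ k, (A i k * X i k).trace :=
    calc f X
      _ = f (∑ i, LinearMap.single 𝕜 _ i (∑ k, LinearMap.single 𝕜 (fun _ => _) k (X i k))) := by
        simp only [LinearMap.coe_single, LinearMap.sum_single_apply]
      _ = ∑ i, ∑ k, (A i k * X i k).trace := by
        simp only [map_sum, hA, LinearMap.comp_apply, ContinuousLinearMap.coe_coe]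
  have re_f_eq {X : ι → κ → Matrix n n 𝕜} (hX : ∀ i k, (X i k).IsHermitian) :
      ∑ i, ∑ k, RCLike.re ((selfAdjointPart ℝ (A i k) : Matrix n n 𝕜) * X i k).trace =
        RCLike.re (f X) := by
    simp only [f_eq_sum_trace, map_sum, re_trace_selfAdjointPart_mul _ (hX _ _)]
  refine ⟨fun i k => selfAdjointPart ℝ (A i k), L, fun i k => (selfAdjointPart ℝ (A i k)).2,
    fun G hG => ?_, ?_⟩
  · exact (re_f_eq (hS G hG)).trans_lt (hfS G hG)
  · exact hfE.trans_eq (re_f_eq hE).symm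

end TraceDuality

theorem incompatible_violates_linear_inequality_general
    {d : ℕ} {B Y : Type} [Fintype B] [Fintype Y]
    (E : B → Y → Matrix (Fin d) (Fin d) ℂ)
    (hE : ∀ b y, (E b y).IsHermitian)
    (hJM : ¬ JointlyMeasurable E) :
    ∃ (F : B → Y → Matrix (Fin d) (Fin d) ℂ) (L : ℝ),
      (∀ b y, (F b y).IsHermitian) ∧
      (∀ G : B → Y → Matrix (Fin d) (Fin d) ℂ, JointlyMeasurable G →
        ∑ b, ∑ y, ((F b y * G b y).trace).re < L) ∧
      L < ∑ b, ∑ y, ((F b y * E b y).trace).re :=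
  exists_isHermitian_separating convex_setOf_jointlyMeasurable
    isCompact_setOf_jointlyMeasurable.isClosed
    (fun _ hG b y => (hG.posSemidef b y).isHermitian) hE hJM

/-- every family of POVMs that is not jointly measurable violates some
linear joint-measurability inequality. -/
theorem incompatible_violates_linear_inequality
    {d : ℕ} {B Y : Type} [Fintype B] [Fintype Y]
    (E : B → Y → Matrix (Fin d) (Fin d) ℂ)
    (hE : ∀ y, IsPOVM fun b => E b y)
    (hJM : ¬ JointlyMeasurable E) :
    ∃ (F : B → Y → Matrix (Fin d) (Fin d) ℂ) (L : ℝ),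
      (∀ b y, (F b y).IsHermitian) ∧
      (∀ G : B → Y → Matrix (Fin d) (Fin d) ℂ,
        (∀ y, IsPOVM fun b => G b y) → JointlyMeasurable G →
          ∑ b, ∑ y, ((F b y * G b y).trace).re ≤ L) ∧
      L < ∑ b, ∑ y, ((F b y * E b y).trace).re := by
  obtain ⟨F, L, hF, hL, hlt⟩ :=
    incompatible_violates_linear_inequality_general E (fun b y => ((hE y).1 b).isHermitian) hJM
  exact ⟨F, L, hF, fun G _ hG => (hL G hG).le, hlt⟩
end

section
/- Let {E_{1|1}, E_{2|1}} and {E_{1|2}, E_{2|2}} be two two-outcome POVMs on ℂ² that together form a jointly measurable family. Then Re tr(X * (E_{1|1} − E_{2|1}) + Y * (E_{1|2} − E_{2|2})) ≤ 2√2, where X = !![0, 1; 1, 0] and Y = !![0, −i; i, 0] are the Pauli matrices. -/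
open scoped BigOperators Matrix ComplexOrder Kronecker ComplexConjugate

/-!
By joint measurability the trace is `∑ l, tr (W l * G l)` for the parent POVM `G`, where `W l` is
an average of the observables under the response of `l`, so it is at most `c * d` once every such
average is at most `c` in the Loewner order. For binary outcomes the averages are `∑ y, s y • A y`
with `|s y| ≤ 1`. When the `A y` are anticommuting Hermitian contractions, the cross terms in the
square of this sum cancel, leaving `∑ y, s y ^ 2 • A y ^ 2 ≤ |Y|`, so that `c = √|Y|` works.
-/

theorem sum_mul_self_of_anticommute {ι R : Type*} [NonUnitalNonAssocRing R] {s : Finset ι}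
    {a : ι → R} (ha : (s : Set ι).Pairwise fun i j ↦ a i * a j = -(a j * a i)) :
    (∑ i ∈ s, a i) * ∑ i ∈ s, a i = ∑ i ∈ s, a i * a i := by
  classical
  induction s using Finset.induction_on with
  | empty => simp
  | insert j s hj ih =>
    have cross : a j * ∑ i ∈ s, a i = -((∑ i ∈ s, a i) * a j) := by
      rw [Finset.mul_sum, Finset.sum_mul, ← Finset.sum_neg_distrib]
      exact Finset.sum_congr rfl fun i hi ↦
        ha (by simp) (by simp [hi]) (ne_of_mem_of_not_mem hi hj).symm
    rw [Finset.sum_insert hj, Finset.sum_insert hj, ← ih (ha.mono (by simp)), add_mul, mul_add,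
      mul_add, cross]
    abel

section OrderedStarAlgebra

variable {R : Type*} [Ring R] [StarRing R] [PartialOrder R] [StarOrderedRing R] [Algebra ℝ R]
  [StarModule ℝ R]

theorem le_smul_one_of_mul_self_le {a : R} (ha : IsSelfAdjoint a) {r : ℝ}
    (hr : 0 < r) (h : a * a ≤ r ^ 2 • (1 : R)) : a ≤ r • (1 : R) := by
  have completed_square :
      (2 * r) • (r • (1 : R) - a) = (r • 1 - a) * (r • 1 - a) + (r ^ 2 • 1 - a * a) := by
    simp only [mul_sub, sub_mul, smul_mul_assoc, mul_smul_comm, one_mul, mul_one]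
    module
  have hsq : 0 ≤ (r • (1 : R) - a) * (r • 1 - a) :=
    (((IsSelfAdjoint.all r).smul (IsSelfAdjoint.one R)).sub ha).mul_self_nonneg
  have hscaled : 0 ≤ (2 * r) • (r • (1 : R) - a) :=
    completed_square ▸ add_nonneg hsq (sub_nonneg.2 h)
  have hinv : 0 ≤ (2 * r)⁻¹ := by positivity
  have := smul_nonneg hinv hscaled
  rwa [inv_smul_smul₀ (by positivity), sub_nonneg] at this

theorem sum_smul_le_sqrt_card_smul_one {ι : Type*} [Fintype ι] {a : ι → R}
    (ha : ∀ i, IsSelfAdjoint (a i)) (ha_sq : ∀ i, a i * a i ≤ 1)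
    (ha_anti : Pairwise fun i j ↦ a i * a j = -(a j * a i)) {s : ι → ℝ} (hs : ∀ i, |s i| ≤ 1) :
    ∑ i, s i • a i ≤ √(Fintype.card ι) • (1 : R) := by
  cases isEmpty_or_nonempty ι
  · simp
  have hscaled_anti :
      Pairwise fun i j ↦ (s i • a i) * (s j • a j) = -((s j • a j) * (s i • a i)) :=
    fun i j hij ↦ by simp only [smul_mul_smul_comm, ha_anti hij, smul_neg, mul_comm (s i)]
  have hterm (i : ι) : (s i * s i) • (a i * a i) ≤ 1 :=
    calc (s i * s i) • (a i * a i) ≤ (s i * s i) • (1 : R) :=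
          smul_le_smul_of_nonneg_left (ha_sq i) (mul_self_nonneg _)
      _ ≤ (1 : ℝ) • (1 : R) :=
          smul_le_smul_of_nonneg_right (abs_le_one_iff_mul_self_le_one.1 (hs i)) zero_le_one
      _ = 1 := one_smul ..
  refine le_smul_one_of_mul_self_le
    (isSelfAdjoint_sum _ fun i _ ↦ (IsSelfAdjoint.all (s i)).smul (ha i))
    (Real.sqrt_pos.2 (Nat.cast_pos.2 Fintype.card_pos)) ?_
  calc (∑ i, s i • a i) * ∑ i, s i • a i = ∑ i, (s i * s i) • (a i * a i) := by
        simp only [sum_mul_self_of_anticommute (hscaled_anti.set_pairwise _), smul_mul_smul_comm]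
    _ ≤ ∑ _i : ι, (1 : R) := Finset.sum_le_sum fun i _ ↦ hterm i
    _ = √(Fintype.card ι) ^ 2 • (1 : R) := by simp [Nat.cast_smul_eq_nsmul]

end OrderedStarAlgebra

section LoewnerOrder

open scoped MatrixOrder

theorem trace_mul_nonneg {n 𝕜 : Type*} [Fintype n] [RCLike 𝕜] {A B : Matrix n n 𝕜}
    (hA : 0 ≤ A) (hB : 0 ≤ B) : 0 ≤ (A * B).trace := by
  classical
  obtain ⟨C, rfl⟩ := CStarAlgebra.nonneg_iff_eq_star_mul_self.1 hB
  rw [← mul_assoc, Matrix.trace_mul_comm, ← mul_assoc]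
  exact ((Matrix.nonneg_iff_posSemidef.1 hA).mul_mul_conjTranspose_same C).trace_nonneg

variable {d : ℕ} {B Y : Type} [Fintype B] [Fintype Y]

theorem IsPOVM.re_trace_sum_mul_le {E W : B → Matrix (Fin d) (Fin d) ℂ} (hE : IsPOVM E) {c : ℝ}
    (hW : ∀ b, W b ≤ c • 1) : (∑ b, W b * E b).trace.re ≤ c * d := by
  have hgap : 0 ≤ (∑ b, (c • 1 - W b) * E b).trace := by
    rw [Matrix.trace_sum]
    exact Finset.sum_nonneg fun b _ ↦ trace_mul_nonneg (sub_nonneg.2 (hW b)) (hE.1 b).nonneg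
  have htotal : ∑ b, (c • 1 - W b) * E b = c • 1 - ∑ b, W b * E b := by
    simp only [sub_mul, smul_mul_assoc, one_mul, Finset.sum_sub_distrib, ← Finset.smul_sum, hE.2]
  rw [htotal] at hgap
  simpa using (Complex.le_def.1 hgap).1

theorem JointlyMeasurable.re_trace_sum_mul_le {E F : B → Y → Matrix (Fin d) (Fin d) ℂ}
    (hE : JointlyMeasurable E) {c : ℝ}
    (hF : ∀ q : Y → B → ℝ, (∀ y, q y ∈ stdSimplex ℝ B) → ∑ y, ∑ b, q y b • F b y ≤ c • 1) :
    (∑ y, ∑ b, F b y * E b y).trace.re ≤ c * d := by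
  obtain ⟨n, G, p, hG, hp_nonneg, hp_sum, hEG⟩ := hE
  have hregroup : ∑ y, ∑ b, F b y * E b y = ∑ l, (∑ y, ∑ b, p b y l • F b y) * G l := by
    simp only [hEG, Finset.mul_sum, Finset.sum_mul, mul_smul_comm, smul_mul_assoc]
    exact (Finset.sum_congr rfl fun y _ ↦ Finset.sum_comm).trans Finset.sum_comm
  rw [hregroup]
  exact hG.re_trace_sum_mul_le fun l ↦
    hF (fun y b ↦ p b y l) fun y ↦ ⟨fun b ↦ hp_nonneg b y l, hp_sum y l⟩

theorem JointlyMeasurable.re_trace_sum_mul_sub_le {E : Fin 2 → Y → Matrix (Fin d) (Fin d) ℂ}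
    (hE : JointlyMeasurable E) {A : Y → Matrix (Fin d) (Fin d) ℂ} {c : ℝ}
    (hA : ∀ s : Y → ℝ, (∀ y, |s y| ≤ 1) → ∑ y, s y • A y ≤ c • 1) :
    (∑ y, A y * (E 0 y - E 1 y)).trace.re ≤ c * d := by
  have := hE.re_trace_sum_mul_le (F := ![A, -A]) (c := c) fun q hq ↦ by
    have hbias : ∀ y, |q y 0 - q y 1| ≤ 1 := fun y ↦
      abs_sub_le_of_nonneg_of_le ((hq y).1 0) (mem_Icc_of_mem_stdSimplex (hq y) 0).2
        ((hq y).1 1) (mem_Icc_of_mem_stdSimplex (hq y) 1).2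
    simpa [Fin.sum_univ_two, sub_smul, ← sub_eq_add_neg] using hA _ hbias
  simpa [Fin.sum_univ_two, mul_sub, ← sub_eq_add_neg] using this

theorem pauli_joint_measurability_inequality_general {E : Fin 2 → Y → Matrix (Fin d) (Fin d) ℂ}
    {A : Y → Matrix (Fin d) (Fin d) ℂ} (hA : ∀ y, (A y).IsHermitian) (hA_sq : ∀ y, A y * A y ≤ 1)
    (hA_anti : Pairwise fun y z ↦ A y * A z = -(A z * A y)) (hE : JointlyMeasurable E) :
    (∑ y, A y * (E 0 y - E 1 y)).trace.re ≤ √(Fintype.card Y) * d :=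
  hE.re_trace_sum_mul_sub_le fun _ hs ↦
    sum_smul_le_sqrt_card_smul_one (fun y ↦ (hA y).isSelfAdjoint) hA_sq hA_anti hs

end LoewnerOrder

/-- The Pauli matrices `X` and `Y`, indexed by the measurement setting they witness. -/
def pauliXY : Fin 2 → Matrix (Fin 2) (Fin 2) ℂ :=
  ![!![0, 1; 1, 0], !![0, -Complex.I; Complex.I, 0]]

theorem pauliXY_isHermitian (y : Fin 2) : (pauliXY y).IsHermitian := by
  ext i j
  fin_cases y <;> fin_cases i <;> fin_cases j <;> simp [pauliXY]

theorem pauliXY_mul_self (y : Fin 2) : pauliXY y * pauliXY y = 1 := by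
  fin_cases y <;> simp [pauliXY, Matrix.one_fin_two]

theorem pauliXY_anticommute :
    Pairwise fun y z ↦ pauliXY y * pauliXY z = -(pauliXY z * pauliXY y) := by
  intro y z hyz
  fin_cases y <;> fin_cases z <;> simp_all [pauliXY]

/-- the joint-measurability inequality
`Re tr(X (E_{1|1} - E_{2|1}) + Y (E_{1|2} - E_{2|2})) ≤ 2√2` for two jointly measurable
binary qubit POVMs, with `X`, `Y` the Pauli matrices.  Here `E b y` has outcome
`b : Fin 2` (0 ↦ outcome 1, 1 ↦ outcome 2) and setting `y : Fin 2`. -/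
theorem pauli_joint_measurability_inequality
    (E : Fin 2 → Fin 2 → Matrix (Fin 2) (Fin 2) ℂ)
    (hE : ∀ y, IsPOVM fun b => E b y)
    (hJM : JointlyMeasurable E) :
    (((!![0, 1; 1, 0] : Matrix (Fin 2) (Fin 2) ℂ) * (E 0 0 - E 1 0)
      + (!![0, -Complex.I; Complex.I, 0] : Matrix (Fin 2) (Fin 2) ℂ)
        * (E 0 1 - E 1 1)).trace).re ≤ 2 * Real.sqrt 2 := by
  open scoped MatrixOrder in
  simpa [pauliXY, mul_comm] using
    pauli_joint_measurability_inequality_general pauliXY_isHermitian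
      (fun y ↦ (pauliXY_mul_self y).le) pauliXY_anticommute hJM
end

section
/- For every p with 0 ≤ p ≤ 1/2 and every finite family of rank-one orthogonal projections P_y on ℂ² (y in a finite set Y), the family of two-outcome noisy POVMs {E_{1|y}, E_{2|y}} with E_{1|y} = p • P_y + ((1−p)/2) • 1 and E_{2|y} = p • (1 − P_y) + ((1−p)/2) • 1 is jointly measurable. (These are the measurements induced on the input of the depolarizing channel C_p by projective measurements on its output.) -/
open scoped BigOperators Matrix ComplexOrder Kronecker ComplexConjugate

/-!
Writing `P = (1 + n · σ) / 2` with `‖n‖ ≤ 1`, the noisy effects become `(1 ± v · σ) / 2` with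
`v = p n` and `‖v‖ ≤ 1 / 2`. A single parent works for all such `v`: the POVM on `ℝ³` with density
proportional to `exp (-‖x‖²) (‖x‖ + x · σ)`, whose outcome `x` is answered with probabilities
`1 / 2 ± ‖v‖ sign ⟪x, v⟫`. By reflection symmetry about the axis of `v`, the integral of
`sign ⟪x, v⟫` against the density is a multiple of `v · σ / ‖v‖`; its coefficient is the ratio of
the Gaussian moments `∫ exp (-‖x‖²) |⟪x, v⟫| / ‖v‖` and `∫ exp (-‖x‖²) ‖x‖`, which is `1 / 2` in
dimension three. That ratio is the threshold on `p`. Since only the signs of `⟪x, v_y⟫` matter and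
there are finitely many `y`, coarse-graining by sign patterns turns the parent into a finite POVM.
-/

open MeasureTheory Module

section FiniteRange

variable {Ω S F : Type*} [MeasurableSpace Ω] {μ : Measure Ω}
  [NormedAddCommGroup F] [NormedSpace ℝ F] {T : Ω → S} {f : Ω → F}

lemma integrableOn_fiber_comp_smul (hT : ∀ s, MeasurableSet (T ⁻¹' {s})) (hf : Integrable f μ)
    (c : S → ℝ) (s : S) : IntegrableOn (fun x ↦ c (T x) • f x) (T ⁻¹' {s}) μ :=
  IntegrableOn.congr_fun (hf.integrableOn.smul (c s)) (fun x (hx : T x = s) ↦ by simp [hx]) (hT s)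

lemma integrable_comp_smul [Finite S] (hT : ∀ s, MeasurableSet (T ⁻¹' {s})) (hf : Integrable f μ)
    (c : S → ℝ) : Integrable (fun x ↦ c (T x) • f x) μ := by
  rw [← integrableOn_univ, ← Set.preimage_univ (f := T), ← Set.iUnion_of_singleton S,
    Set.preimage_iUnion]
  exact integrableOn_finite_iUnion.2 fun s ↦ integrableOn_fiber_comp_smul hT hf c s

lemma integral_comp_smul_eq_sum [Fintype S] (hT : ∀ s, MeasurableSet (T ⁻¹' {s}))
    (hf : Integrable f μ) (c : S → ℝ) :
    ∫ x, c (T x) • f x ∂μ = ∑ s, c s • ∫ x in T ⁻¹' {s}, f x ∂μ := by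
  have hdisj : Pairwise (Function.onFun Disjoint fun s ↦ T ⁻¹' {s}) := fun s t hst ↦
    Disjoint.preimage T (Set.disjoint_singleton.2 hst)
  rw [← setIntegral_univ, ← Set.preimage_univ (f := T), ← Set.iUnion_of_singleton S,
    Set.preimage_iUnion, integral_iUnion_fintype hT hdisj (integrableOn_fiber_comp_smul hT hf c)]
  refine Finset.sum_congr rfl fun s _ ↦ ?_
  rw [← integral_smul]
  exact setIntegral_congr_fun (hT s) fun x (hx : T x = s) ↦ by simp only [hx]

end FiniteRange

section JointMeasurability

variable {d : ℕ} {B Y : Type} [Fintype B] [Fintype Y]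

lemma jointlyMeasurable_of_fintype {S : Type*} [Fintype S] {G : S → Matrix (Fin d) (Fin d) ℂ}
    (hpos : ∀ s, (G s).PosSemidef) (hsum : ∑ s, G s = 1) {q : B → Y → S → ℝ}
    (hq : ∀ b y s, 0 ≤ q b y s) (hq_sum : ∀ y s, ∑ b, q b y s = 1) :
    JointlyMeasurable fun b y ↦ ∑ s, q b y s • G s := by
  let e := (Fintype.equivFin S).symm
  exact ⟨_, G ∘ e, fun b y l ↦ q b y (e l), ⟨fun l ↦ hpos (e l), (e.sum_comp G).trans hsum⟩,
    fun b y l ↦ hq b y (e l), fun y l ↦ hq_sum y (e l),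
    fun b y ↦ (e.sum_comp fun s ↦ q b y s • G s).symm⟩

open scoped MatrixOrder Matrix.Norms.L2Operator

lemma posSemidef_integral {Ω m : Type*} [MeasurableSpace Ω] {μ : Measure Ω} [Fintype m]
    [DecidableEq m] {f : Ω → Matrix m m ℂ} (hf : ∀ x, (f x).PosSemidef) :
    (∫ x, f x ∂μ).PosSemidef :=
  Matrix.nonneg_iff_posSemidef.1 (integral_nonneg (f := f) fun x ↦ (hf x).nonneg)

lemma jointlyMeasurable_integral {Ω S : Type*} [MeasurableSpace Ω] {μ : Measure Ω} [Finite S]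
    {f : Ω → Matrix (Fin d) (Fin d) ℂ} (hf : Integrable f μ) (hpos : ∀ x, (f x).PosSemidef)
    (hf_one : ∫ x, f x ∂μ = 1) {T : Ω → S} (hT : ∀ s, MeasurableSet (T ⁻¹' {s}))
    {q : B → Y → S → ℝ} (hq : ∀ b y s, 0 ≤ q b y s) (hq_sum : ∀ y s, ∑ b, q b y s = 1) :
    JointlyMeasurable fun b y ↦ ∫ x, q b y (T x) • f x ∂μ := by
  cases nonempty_fintype S
  simp_rw [integral_comp_smul_eq_sum hT hf]
  refine jointlyMeasurable_of_fintype (fun s ↦ posSemidef_integral hpos) ?_ hq hq_sum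
  simpa only [one_smul, hf_one] using (integral_comp_smul_eq_sum hT hf fun _ ↦ 1).symm

end JointMeasurability

section Moments

lemma integral_eq_zero_of_odd {G F : Type*} [MeasurableSpace G] [AddGroup G] [MeasurableNeg G]
    {μ : Measure G} [μ.IsNegInvariant] [NormedAddCommGroup F] [NormedSpace ℝ F] {f : G → F}
    (hf : f.Odd) : ∫ x, f x ∂μ = 0 := by
  have : IsAddTorsionFree F := .of_isTorsionFree ℝ F
  rw [← self_eq_neg, ← integral_neg, ← integral_neg_eq_self]
  simp only [hf _]

lemma measurableSet_sign_inner_fiber {E : Type*} [NormedAddCommGroup E] [InnerProductSpace ℝ E]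
    [MeasurableSpace E] [OpensMeasurableSpace E] (n : E) (s : SignType) :
    MeasurableSet ((fun x : E ↦ SignType.sign (inner ℝ x n)) ⁻¹' {s}) :=
  (Set.ordConnected_singleton.preimage_mono SignType.sign.monotone).measurableSet.preimage
    (by fun_prop : Continuous fun x : E ↦ inner ℝ x n).measurable

lemma pow_pred_smul_exp_neg_sq_mul {k : ℕ} (hk : k ≠ 0) (r : ℝ) :
    r ^ (k - 1) • (Real.exp (-r ^ 2) * r) = r ^ (k : ℝ) * Real.exp (-r ^ (2 : ℝ)) := by
  rw [Real.rpow_natCast, Real.rpow_two, smul_eq_mul, ← pow_sub_one_mul hk r]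
  ring

variable {E : Type*} [NormedAddCommGroup E] [InnerProductSpace ℝ E] [FiniteDimensional ℝ E]
  [MeasurableSpace E] [BorelSpace E]

lemma integrable_exp_neg_norm_sq_mul_norm [Nontrivial E] :
    Integrable fun x : E ↦ Real.exp (-‖x‖ ^ 2) * ‖x‖ := by
  refine (integrable_fun_norm_addHaar volume (f := fun r : ℝ ↦ Real.exp (-r ^ 2) * r)).2 ?_
  have hrpow := integrableOn_rpow_mul_exp_neg_rpow (p := 2) (s := finrank ℝ E)
    (by linarith [(finrank ℝ E).cast_nonneg (α := ℝ)]) two_pos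
  exact hrpow.congr_fun (fun r _ ↦ (pow_pred_smul_exp_neg_sq_mul finrank_pos.ne' r).symm)
    measurableSet_Ioi

lemma integrable_exp_neg_norm_sq_smul [Nontrivial E] :
    Integrable fun x : E ↦ Real.exp (-‖x‖ ^ 2) • x :=
  integrable_exp_neg_norm_sq_mul_norm.mono' (by fun_prop) (.of_forall fun x ↦ by simp [norm_smul])

lemma integral_exp_neg_norm_sq_mul_norm [Nontrivial E] :
    ∫ x : E, Real.exp (-‖x‖ ^ 2) * ‖x‖ =
      √Real.pi ^ finrank ℝ E * Real.Gamma ((finrank ℝ E + 1) / 2) /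
        Real.Gamma (finrank ℝ E / 2) := by
  have hd : 0 < finrank ℝ E := finrank_pos
  have hradial : ∫ r in Set.Ioi (0 : ℝ), r ^ (finrank ℝ E - 1) • (Real.exp (-r ^ 2) * r) =
      1 / 2 * Real.Gamma ((finrank ℝ E + 1) / 2) := by
    rw [← integral_rpow_mul_exp_neg_rpow two_pos
      (by linarith [(finrank ℝ E).cast_nonneg (α := ℝ)])]
    exact setIntegral_congr_fun measurableSet_Ioi fun r _ ↦ pow_pred_smul_exp_neg_sq_mul hd.ne' r
  rw [integral_fun_norm_addHaar volume fun r ↦ Real.exp (-r ^ 2) * r, hradial, Measure.real,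
    InnerProductSpace.volume_ball, ENNReal.ofReal_one, one_pow, one_mul,
    ENNReal.toReal_ofReal (by positivity), Real.Gamma_add_one (by positivity), nsmul_eq_mul,
    smul_eq_mul]
  have := Real.Gamma_pos_of_pos (s := finrank ℝ E / 2) (by positivity)
  field_simp

lemma integral_exp_neg_sq_mul_abs : ∫ t : ℝ, Real.exp (-t ^ 2) * |t| = 1 := by
  have h := integral_exp_neg_norm_sq_mul_norm (E := ℝ)
  rw [finrank_self, Nat.cast_one, pow_one, add_self_div_two, Real.Gamma_one,
    Real.Gamma_one_half_eq, mul_one, div_self (by positivity)] at h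
  simpa only [Real.norm_eq_abs, sq_abs] using h

lemma integral_exp_neg_norm_sq_mul_abs_coord {ι : Type*} [Fintype ι] (i : ι) :
    ∫ x : EuclideanSpace ℝ ι, Real.exp (-‖x‖ ^ 2) * |x i| =
      √Real.pi ^ (Fintype.card ι - 1) := by
  classical
  rw [← (PiLp.volume_preserving_toLp ι).integral_comp
    (MeasurableEquiv.toLp 2 (ι → ℝ)).measurableEmbedding]
  have hprod (x : ι → ℝ) : Real.exp (-‖WithLp.toLp 2 x‖ ^ 2) * |WithLp.toLp 2 x i| =
      ∏ j, Real.exp (-x j ^ 2) * if j = i then |x j| else 1 := by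
    rw [EuclideanSpace.norm_sq_eq, Finset.prod_mul_distrib, ← Real.exp_sum,
      Finset.prod_ite_eq' _ _ fun j ↦ |x j|]
    simp
  have hfactor (j : ι) : (∫ t : ℝ, Real.exp (-t ^ 2) * if j = i then |t| else 1) =
      if j = i then 1 else √Real.pi := by
    split_ifs
    · exact integral_exp_neg_sq_mul_abs
    · simpa using integral_gaussian 1
  simp_rw [hprod, integral_fintype_prod_volume_eq_prod
    (fun (j : ι) (t : ℝ) ↦ Real.exp (-t ^ 2) * if j = i then |t| else 1), hfactor]
  rw [Finset.prod_ite, Finset.prod_const_one, one_mul, Finset.prod_const]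
  simp [Finset.filter_ne']

lemma integral_exp_neg_norm_sq_mul_abs_inner (n : E) :
    ∫ x : E, Real.exp (-‖x‖ ^ 2) * |inner ℝ x n| = ‖n‖ * √Real.pi ^ (finrank ℝ E - 1) := by
  rcases eq_or_ne n 0 with rfl | hn
  · simp
  have : Nontrivial E := nontrivial_of_ne n 0 hn
  let i : Fin (finrank ℝ E) := ⟨0, finrank_pos⟩
  have hu : Orthonormal ℝ (({i} : Set (Fin (finrank ℝ E))).domRestrict fun _ ↦ ‖n‖⁻¹ • n) :=
    ⟨fun _ ↦ by simp [norm_smul, hn], Subsingleton.pairwise⟩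
  obtain ⟨b, hb⟩ := hu.exists_orthonormalBasis_extension_of_card_eq (by simp)
  have hinner (x : E) : inner ℝ x n = ‖n‖ * b.repr x i := by
    rw [b.repr_apply_apply, hb i rfl, real_inner_smul_left, real_inner_comm,
      mul_inv_cancel_left₀ (norm_ne_zero_iff.2 hn)]
  calc
    _ = ∫ x : E, ‖n‖ * (Real.exp (-‖b.repr x‖ ^ 2) * |b.repr x i|) := by
      simp_rw [hinner, abs_mul, abs_norm, LinearIsometryEquiv.norm_map, mul_left_comm]
    _ = ‖n‖ * ∫ x : EuclideanSpace ℝ (Fin (finrank ℝ E)), Real.exp (-‖x‖ ^ 2) * |x i| := by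
      rw [integral_const_mul, b.measurePreserving_repr.integral_comp
        b.repr.toHomeomorph.measurableEmbedding fun x ↦ Real.exp (-‖x‖ ^ 2) * |x i|]
    _ = _ := by rw [integral_exp_neg_norm_sq_mul_abs_coord, Fintype.card_fin]

lemma norm_sq_smul_integral_sign_inner_smul {g : ℝ → ℝ} (hg : Integrable fun x : E ↦ g ‖x‖ • x)
    (n : E) :
    ‖n‖ ^ 2 • ∫ x : E, (SignType.sign (inner ℝ x n) : ℝ) • g ‖x‖ • x =
      (∫ x : E, g ‖x‖ * |inner ℝ x n|) • n := by
  let f (x : E) : E := (SignType.sign (inner ℝ x n) : ℝ) • g ‖x‖ • x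
  have hf : Integrable f := integrable_comp_smul (measurableSet_sign_inner_fiber n) hg _
  let R := (ℝ ∙ n).reflection
  have hRn : R n = n := Submodule.reflection_mem_subspace_eq_self
    (Submodule.mem_span_singleton_self n)
  have hinner (x : E) : inner ℝ (R x) n = inner ℝ x n := by
    conv_lhs => rw [← hRn, R.inner_map_map]
  have hfixed : R (∫ x, f x) = ∫ x, f x := calc
    R (∫ x, f x) = ∫ x, R (f x) := (R.toContinuousLinearEquiv.integral_comp_comm f).symm
    _ = ∫ x, f (R x) := by simp only [f, map_smul, hinner, R.norm_map]
    _ = ∫ x, f x := R.measurePreserving.integral_comp R.toHomeomorph.measurableEmbedding f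
  obtain ⟨c, hc⟩ := Submodule.mem_span_singleton.1 ((Submodule.reflection_eq_self_iff _).1 hfixed)
  have hinner_integral : ∫ x : E, g ‖x‖ * |inner ℝ x n| = inner ℝ n (∫ x, f x) := by
    rw [← integral_inner hf]
    refine integral_congr_ae (.of_forall fun x ↦ ?_)
    simp only [f, real_inner_smul_right, real_inner_comm x n, ← sign_mul_self]
    ring
  change ‖n‖ ^ 2 • ∫ x, f x = _
  rw [hinner_integral, ← hc, real_inner_smul_right, real_inner_self_eq_norm_sq, smul_smul, mul_comm]

end Moments

section Pauli

/-- The traceless Hermitian matrix `v · σ = v₀ σ_x + v₁ σ_y + v₂ σ_z`, where `σ` is the vector of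
Pauli matrices; Bloch vectors parametrize qubit effects as `a • 1 + v · σ`. -/
noncomputable def pauliVec : EuclideanSpace ℝ (Fin 3) →ₗ[ℝ] Matrix (Fin 2) (Fin 2) ℂ where
  toFun v := v 0 • !![0, 1; 1, 0] + v 1 • !![0, -Complex.I; Complex.I, 0] + v 2 • !![1, 0; 0, -1]
  map_add' v w := by simp only [PiLp.add_apply]; module
  map_smul' c v := by simp only [PiLp.smul_apply, smul_eq_mul, RingHom.id_apply]; module

lemma pauliVec_apply (v : EuclideanSpace ℝ (Fin 3)) :
    pauliVec v = !![(v 2 : ℂ), v 0 - v 1 * Complex.I; v 0 + v 1 * Complex.I, -(v 2 : ℂ)] := by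
  ext i j
  fin_cases i <;> fin_cases j <;> simp [pauliVec, sub_eq_add_neg]

lemma isHermitian_pauliVec (v : EuclideanSpace ℝ (Fin 3)) : (pauliVec v).IsHermitian := by
  ext i j
  fin_cases i <;> fin_cases j <;> simp [pauliVec_apply, sub_eq_add_neg]

lemma pauliVec_mul_self (v : EuclideanSpace ℝ (Fin 3)) :
    pauliVec v * pauliVec v = (‖v‖ ^ 2) • (1 : Matrix (Fin 2) (Fin 2) ℂ) := by
  rw [EuclideanSpace.real_norm_sq_eq, Fin.sum_univ_three, pauliVec_apply, Matrix.mul_fin_two,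
    Matrix.one_fin_two, Matrix.smul_of]
  simp only [Matrix.smul_cons, Matrix.smul_empty, Complex.real_smul, Complex.ofReal_add,
    Complex.ofReal_pow, mul_zero, mul_one]
  grind [Complex.I_sq]

lemma det_one_add_pauliVec (v : EuclideanSpace ℝ (Fin 3)) :
    (1 + pauliVec v).det = ((1 - ‖v‖ ^ 2 : ℝ) : ℂ) := by
  rw [EuclideanSpace.real_norm_sq_eq, Fin.sum_univ_three, pauliVec_apply, Matrix.one_fin_two]
  simp only [Matrix.of_add_of, Matrix.add_cons, Matrix.head_cons, Matrix.tail_cons,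
    Matrix.empty_add_empty, Matrix.det_fin_two_of]
  push_cast
  linear_combination (v 1 : ℂ) ^ 2 * Complex.I_sq

lemma exists_pauliVec_eq {A : Matrix (Fin 2) (Fin 2) ℂ} (hA : A.IsHermitian) (htr : A.trace = 0) :
    ∃ v, pauliVec v = A := by
  have h00 : (A 0 0).im = 0 := Complex.conj_eq_iff_im.1 (hA.apply 0 0)
  have h01 : A 0 1 = star (A 1 0) := (hA.apply 0 1).symm
  have h11 : A 1 1 = -A 0 0 := by rw [Matrix.trace_fin_two] at htr; linear_combination htr
  refine ⟨!₂[(A 1 0).re, (A 1 0).im, (A 0 0).re], ?_⟩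
  ext i j
  fin_cases i <;> fin_cases j <;> simp [pauliVec_apply, h01, h11, h00, Complex.ext_iff]

lemma posSemidef_norm_smul_one_add_pauliVec (v : EuclideanSpace ℝ (Fin 3)) :
    (‖v‖ • (1 : Matrix (Fin 2) (Fin 2) ℂ) + pauliVec v).PosSemidef := by
  rcases eq_or_ne v 0 with rfl | hv
  · simpa using Matrix.PosSemidef.zero
  set M := ‖v‖ • (1 : Matrix (Fin 2) (Fin 2) ℂ) + pauliVec v with hM
  have hsq : Mᴴ * M = (2 * ‖v‖) • M := by
    rw [hM, Matrix.conjTranspose_add, (isHermitian_pauliVec v).eq]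
    simp only [Matrix.conjTranspose_smul, Matrix.conjTranspose_one, star_trivial, add_mul, mul_add,
      pauliVec_mul_self, smul_mul_assoc, mul_smul_comm, mul_one, one_mul]
    module
  have h2 : (2 * ‖v‖)⁻¹ • (Mᴴ * M) = M := by
    rw [hsq, inv_smul_smul₀ (by simpa using hv)]
  rw [← h2]
  exact (Matrix.posSemidef_conjTranspose_mul_self M).smul (by positivity : 0 ≤ (2 * ‖v‖)⁻¹)

lemma exists_eq_half_smul_one_add_pauliVec {P : Matrix (Fin 2) (Fin 2) ℂ} (hP : P.PosSemidef)
    (htr : P.trace = 1) : ∃ n, ‖n‖ ≤ 1 ∧ P = (1 / 2 : ℝ) • (1 + pauliVec n) := by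
  obtain ⟨n, hn⟩ := exists_pauliVec_eq (A := (2 : ℝ) • P - 1)
    ((hP.isHermitian.smul (.all 2)).sub Matrix.isHermitian_one) (by simp [htr])
  have h2P : 1 + pauliVec n = (2 : ℝ) • P := by rw [hn]; abel
  have hdet : 0 ≤ 1 - ‖n‖ ^ 2 := by
    have h := (hP.smul zero_le_two (α := ℝ)).det_nonneg
    rw [← h2P, det_one_add_pauliVec] at h
    exact_mod_cast h
  exact ⟨n, by nlinarith [norm_nonneg n], by rw [h2P]; module⟩

end Pauli

section Gaussian

lemma integral_exp_neg_norm_sq_mul_norm_fin_three :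
    ∫ x : EuclideanSpace ℝ (Fin 3), Real.exp (-‖x‖ ^ 2) * ‖x‖ = 2 * Real.pi := by
  rw [integral_exp_neg_norm_sq_mul_norm, finrank_euclideanSpace_fin]
  have h32 : Real.Gamma (3 / 2) = √Real.pi / 2 := by
    rw [show (3 / 2 : ℝ) = 1 / 2 + 1 by norm_num, Real.Gamma_add_one (by norm_num),
      Real.Gamma_one_half_eq]
    ring
  have h2 : Real.Gamma ((3 + 1) / 2) = 1 := by norm_num
  push_cast
  rw [h32, h2, pow_succ, Real.sq_sqrt Real.pi_pos.le]
  field_simp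

lemma norm_smul_integral_sign_inner_smul_exp (n : EuclideanSpace ℝ (Fin 3)) :
    ‖n‖ • ∫ x : EuclideanSpace ℝ (Fin 3),
      (SignType.sign (inner ℝ x n) : ℝ) • Real.exp (-‖x‖ ^ 2) • x = Real.pi • n := by
  rcases eq_or_ne n 0 with rfl | hn
  · simp
  have h := norm_sq_smul_integral_sign_inner_smul (g := fun r ↦ Real.exp (-r ^ 2))
    integrable_exp_neg_norm_sq_smul n
  rw [integral_exp_neg_norm_sq_mul_abs_inner, finrank_euclideanSpace_fin,
    Real.sq_sqrt Real.pi_pos.le, sq, mul_smul, mul_smul] at h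
  exact smul_right_injective _ (norm_ne_zero_iff.2 hn) h

open scoped Matrix.Norms.L2Operator

/-- The density, with respect to Lebesgue measure on `ℝ³`, of the rotation-covariant qubit POVM:
the value at `x` is a multiple of the projection with Bloch vector `x / ‖x‖`, and the Gaussian
weight is normalized so that the density integrates to `1`. -/
noncomputable def covariantDensity (x : EuclideanSpace ℝ (Fin 3)) : Matrix (Fin 2) (Fin 2) ℂ :=
  ((2 * Real.pi)⁻¹ * Real.exp (-‖x‖ ^ 2)) • (‖x‖ • 1 + pauliVec x)

lemma posSemidef_covariantDensity (x : EuclideanSpace ℝ (Fin 3)) :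
    (covariantDensity x).PosSemidef :=
  (posSemidef_norm_smul_one_add_pauliVec x).smul
    (by positivity : 0 ≤ (2 * Real.pi)⁻¹ * Real.exp (-‖x‖ ^ 2))

lemma covariantDensity_eq (x : EuclideanSpace ℝ (Fin 3)) :
    covariantDensity x = (2 * Real.pi)⁻¹ •
      ((Real.exp (-‖x‖ ^ 2) * ‖x‖) • 1 + pauliVec (Real.exp (-‖x‖ ^ 2) • x)) := by
  rw [covariantDensity, map_smul]
  module

lemma integrable_covariantDensity : Integrable covariantDensity := by
  rw [funext covariantDensity_eq]
  exact ((integrable_exp_neg_norm_sq_mul_norm.smul_const (1 : Matrix (Fin 2) (Fin 2) ℂ)).add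
    (pauliVec.toContinuousLinearMap.integrable_comp integrable_exp_neg_norm_sq_smul)).smul
      (2 * Real.pi)⁻¹

lemma integral_comp_smul_covariantDensity {S : Type*} [Finite S] {T : EuclideanSpace ℝ (Fin 3) → S}
    (hT : ∀ s, MeasurableSet (T ⁻¹' {s})) (c : S → ℝ) :
    ∫ x, c (T x) • covariantDensity x = (2 * Real.pi)⁻¹ •
      ((∫ x, c (T x) • (Real.exp (-‖x‖ ^ 2) * ‖x‖)) • 1 +
        pauliVec (∫ x, c (T x) • Real.exp (-‖x‖ ^ 2) • x)) := by
  have hscalar := integrable_comp_smul hT integrable_exp_neg_norm_sq_mul_norm c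
  have hvector := integrable_comp_smul hT integrable_exp_neg_norm_sq_smul c
  have hpauli : Integrable fun x ↦ pauliVec (c (T x) • Real.exp (-‖x‖ ^ 2) • x) :=
    pauliVec.toContinuousLinearMap.integrable_comp hvector
  have hcomm : ∫ x, pauliVec (c (T x) • Real.exp (-‖x‖ ^ 2) • x) =
      pauliVec (∫ x, c (T x) • Real.exp (-‖x‖ ^ 2) • x) :=
    pauliVec.toContinuousLinearMap.integral_comp_comm hvector
  rw [← integral_smul_const, ← hcomm, ← integral_add (hscalar.smul_const 1) hpauli, ← integral_smul]
  refine integral_congr_ae (.of_forall fun x ↦ ?_)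
  simp only [covariantDensity_eq, map_smul]
  module

lemma integral_covariantDensity : ∫ x, covariantDensity x = 1 := by
  have hodd : ∫ x : EuclideanSpace ℝ (Fin 3), Real.exp (-‖x‖ ^ 2) • x = 0 :=
    integral_eq_zero_of_odd fun x ↦ by simp
  have h := integral_comp_smul_covariantDensity (T := fun _ ↦ ()) (fun _ ↦ by simp) fun _ ↦ 1
  simp only [one_smul, hodd, map_zero, add_zero,
    integral_exp_neg_norm_sq_mul_norm_fin_three] at h
  rw [h, inv_smul_smul₀ Real.two_pi_pos.ne']

lemma norm_smul_integral_sign_inner_smul_covariantDensity (n : EuclideanSpace ℝ (Fin 3)) :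
    ‖n‖ • ∫ x, (SignType.sign (inner ℝ x n) : ℝ) • covariantDensity x =
      (1 / 2 : ℝ) • pauliVec n := by
  have hodd : ∫ x : EuclideanSpace ℝ (Fin 3),
      (SignType.sign (inner ℝ x n) : ℝ) • (Real.exp (-‖x‖ ^ 2) * ‖x‖) = 0 :=
    integral_eq_zero_of_odd fun x ↦ by simp [Left.sign_neg]
  rw [integral_comp_smul_covariantDensity (measurableSet_sign_inner_fiber n) _, hodd, zero_smul,
    zero_add, smul_comm, ← map_smul, norm_smul_integral_sign_inner_smul_exp, map_smul, smul_smul]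
  congr 1
  field_simp

lemma integral_response_smul_covariantDensity (n : EuclideanSpace ℝ (Fin 3)) (c : ℝ) :
    ∫ x, (1 / 2 + c * (‖n‖ * (SignType.sign (inner ℝ x n) : ℝ))) • covariantDensity x =
      (1 / 2 : ℝ) • (1 + c • pauliVec n) := by
  have hsign := integrable_comp_smul (measurableSet_sign_inner_fiber n) integrable_covariantDensity
    fun s ↦ (s : ℝ)
  simp_rw [add_smul, mul_smul]
  rw [integral_add (integrable_covariantDensity.fun_smul _) ((hsign.fun_smul _).fun_smul _),
    integral_smul, integral_smul, integral_smul, integral_covariantDensity,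
    norm_smul_integral_sign_inner_smul_covariantDensity]
  module

end Gaussian

lemma abs_coe_signType_le_one (s : SignType) : |(s : ℝ)| ≤ 1 := by cases s <;> simp

theorem jointlyMeasurable_half_smul_one_add_pauliVec {Y : Type} [Fintype Y]
    {v : Y → EuclideanSpace ℝ (Fin 3)} (hv : ∀ y, ‖v y‖ ≤ 1 / 2) :
    JointlyMeasurable fun (b : Fin 2) y ↦
      (1 / 2 : ℝ) • (1 + (-1 : ℝ) ^ (b : ℕ) • pauliVec (v y)) := by
  classical
  let T (x : EuclideanSpace ℝ (Fin 3)) (y : Y) : SignType := SignType.sign (inner ℝ x (v y))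
  let q (b : Fin 2) (y : Y) (s : Y → SignType) : ℝ := 1 / 2 + (-1) ^ (b : ℕ) * (‖v y‖ * s y)
  have hT (s : Y → SignType) : MeasurableSet (T ⁻¹' {s}) := by
    have : T ⁻¹' {s} = ⋂ y, (fun x ↦ SignType.sign (inner ℝ x (v y))) ⁻¹' {s y} := by
      ext x
      simp [T, funext_iff]
    rw [this]
    exact .iInter fun y ↦ measurableSet_sign_inner_fiber (v y) (s y)
  have hq (b y s) : 0 ≤ q b y s := by
    have : |(-1) ^ (b : ℕ) * (‖v y‖ * s y)| ≤ 1 / 2 := by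
      rw [abs_mul, abs_neg_one_pow, one_mul, abs_mul, abs_norm]
      exact (mul_le_of_le_one_right (norm_nonneg _) (abs_coe_signType_le_one (s y))).trans (hv y)
    simp only [q]
    linarith [neg_le_of_abs_le this]
  have hq_sum (y s) : ∑ b, q b y s = 1 := by
    simp only [q, Fin.sum_univ_two, Fin.val_zero, Fin.val_one]
    ring
  simpa only [q, T, integral_response_smul_covariantDensity] using
    jointlyMeasurable_integral integrable_covariantDensity posSemidef_covariantDensity
      integral_covariantDensity hT hq hq_sum

theorem noisy_projective_jointly_measurable_general {p : ℝ} (hp : |p| ≤ 1 / 2) {Y : Type}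
    [Fintype Y] {P : Y → Matrix (Fin 2) (Fin 2) ℂ} (hP : ∀ y, (P y).PosSemidef)
    (htr : ∀ y, (P y).trace = 1) :
    JointlyMeasurable (fun (b : Fin 2) (y : Y) =>
      if b = 0 then p • P y + ((1 - p) / 2) • (1 : Matrix (Fin 2) (Fin 2) ℂ)
      else p • ((1 : Matrix (Fin 2) (Fin 2) ℂ) - P y)
        + ((1 - p) / 2) • (1 : Matrix (Fin 2) (Fin 2) ℂ)) := by
  choose n hn hPn using fun y ↦ exists_eq_half_smul_one_add_pauliVec (hP y) (htr y)
  have hpn (y : Y) : ‖p • n y‖ ≤ 1 / 2 := by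
    rw [norm_smul, Real.norm_eq_abs]
    exact (mul_le_of_le_one_right (abs_nonneg p) (hn y)).trans hp
  convert jointlyMeasurable_half_smul_one_add_pauliVec hpn using 3 with b y
  rw [hPn, map_smul]
  rcases Fin.exists_fin_two.1 ⟨b, rfl⟩ with rfl | rfl
  · rw [if_pos rfl, Fin.val_zero, pow_zero]; module
  · rw [if_neg one_ne_zero, Fin.val_one, pow_one]; module

/-- for `0 ≤ p ≤ 1/2`, the noisy two-outcome POVMs
`E_{1|y} = p P_y + ((1-p)/2) 1`, `E_{2|y} = p (1 - P_y) + ((1-p)/2) 1` obtained from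
any family of rank-one projections `P_y` on `ℂ²` are jointly measurable. -/
theorem noisy_projective_jointly_measurable
    (p : ℝ) (hp0 : 0 ≤ p) (hp : p ≤ 1 / 2)
    {Y : Type} [Fintype Y]
    (P : Y → Matrix (Fin 2) (Fin 2) ℂ)
    (hP : ∀ y, (P y)ᴴ = P y ∧ P y * P y = P y ∧ (P y).trace = 1) :
    JointlyMeasurable (fun (b : Fin 2) (y : Y) =>
      if b = 0 then p • P y + ((1 - p) / 2) • (1 : Matrix (Fin 2) (Fin 2) ℂ)
      else p • ((1 : Matrix (Fin 2) (Fin 2) ℂ) - P y)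
        + ((1 - p) / 2) • (1 : Matrix (Fin 2) (Fin 2) ℂ)) :=
  noisy_projective_jointly_measurable_general (abs_le.2 ⟨by linarith, hp⟩)
    (fun y ↦ by simpa [hP y] using Matrix.posSemidef_conjTranspose_mul_self (P y))
    fun y ↦ (hP y).2.2
end

section
/- For every p with 1/2 < p ≤ 1, there exist a finite set Y and rank-one orthogonal projections P_y on ℂ² (y ∈ Y) such that the family of two-outcome noisy POVMs {E_{1|y}, E_{2|y}} with E_{1|y} = p • P_y + ((1−p)/2) • 1 and E_{2|y} = p • (1 − P_y) + ((1−p)/2) • 1 is not jointly measurable. (Hence the non-entanglement-breaking character of the depolarizing channel C_p can be verified with an untrusted measurement device whenever p > 1/2.) -/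
open scoped BigOperators Matrix ComplexOrder Kronecker ComplexConjugate

/-
Joint measurability forces `E 0 y - E 1 y = ∑ l, a y l • G l` with `|a y l| ≤ 1`, for one parent
POVM `G`. Paired with a direction `n y`, the Bloch vectors of the left-hand sides contribute `2 p`,
while those of the `G l` have norm at most `tr (G l)`, and these traces sum to `2`. Hence
`p ≤ max_{‖u‖ = 1} ∑ y, c y * |⟪u, n y⟫|` for all weights `c`. If `n` is uniform on the sphere of
`ℝ³`, the average of `|⟪u, n⟫|` is `1 / 2` for every `u`: integrate `|⟪u, v⟫| exp (-‖v‖²)` in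
Cartesian and in polar coordinates. This average is a Bochner integral in `C(S², ℝ)`, so it lies in
the closed convex hull of the integrand, and finitely many directions come uniformly close to it.
-/

section PolarIntegrals

open MeasureTheory Measure Metric Module Real

section Normed

variable {E 𝕜 : Type*} [NormedAddCommGroup E] [NormedSpace ℝ E] [MeasurableSpace E] [RCLike 𝕜]

lemma integral_volumeIoiPow {F : Type*} [NormedAddCommGroup F] [NormedSpace ℝ F]
    (k : ℕ) (f : ℝ → F) :
    ∫ r : Set.Ioi (0 : ℝ), f r ∂volumeIoiPow k = ∫ r in Set.Ioi 0, r ^ k • f r := by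
  simp only [volumeIoiPow, ENNReal.ofReal]
  rw [integral_withDensity_eq_integral_smul (by fun_prop),
    integral_subtype_comap measurableSet_Ioi fun r ↦ Real.toNNReal (r ^ k) • f r]
  refine setIntegral_congr_fun measurableSet_Ioi fun r hr ↦ ?_
  rw [NNReal.smul_def, Real.coe_toNNReal _ (pow_nonneg (le_of_lt hr) _)]

lemma integral_eq_integral_toSphere_mul [BorelSpace E] [FiniteDimensional ℝ E] [Nontrivial E]
    (μ : Measure E) [μ.IsAddHaarMeasure] {F : E → 𝕜} {a : sphere (0 : E) 1 → 𝕜} {b : ℝ → 𝕜}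
    (hF : ∀ (n : sphere (0 : E) 1) (r : ℝ), 0 < r → F (r • (n : E)) = a n * b r) :
    ∫ x, F x ∂μ = (∫ n, a n ∂μ.toSphere) * ∫ r in Set.Ioi 0, r ^ (finrank ℝ E - 1) • b r := by
  have hpolar : ∀ x : ({0}ᶜ : Set E), F x =
      a (homeomorphUnitSphereProd E x).1 * b (homeomorphUnitSphereProd E x).2 := fun x ↦ by
    rw [← hF _ _ (homeomorphUnitSphereProd E x).2.2,
      ← homeomorphUnitSphereProd_symm_apply_coe, Homeomorph.symm_apply_apply]
  calc ∫ x, F x ∂μ = ∫ x : ({0}ᶜ : Set E), F x ∂μ.comap (↑) := by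
        rw [integral_subtype_comap (measurableSet_singleton _).compl, restrict_compl_singleton]
    _ = ∫ x, a x.1 * b x.2 ∂μ.toSphere.prod (volumeIoiPow (finrank ℝ E - 1)) := by
        simp only [hpolar]
        exact μ.measurePreserving_homeomorphUnitSphereProd.integral_comp
          (Homeomorph.measurableEmbedding _) fun x ↦ a x.1 * b x.2
    _ = _ := by
        rw [integral_prod_mul a fun r : Set.Ioi (0 : ℝ) ↦ b r, integral_volumeIoiPow]

end Normed

lemma integral_Ioi_pow_mul_exp_neg_sq (k : ℕ) :
    ∫ r in Set.Ioi (0 : ℝ), r ^ k * exp (-r ^ 2) = Gamma ((k + 1) / 2) / 2 := by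
  have h := integral_rpow_mul_exp_neg_rpow (p := 2) (q := k) two_pos
    (by linarith [k.cast_nonneg (α := ℝ)])
  simp only [rpow_natCast, rpow_two] at h
  rw [h]
  ring

lemma integral_abs_mul_exp_neg_sq : ∫ t : ℝ, |t| * exp (-t ^ 2) = 1 := by
  have hcomp := integral_comp_abs (f := fun t ↦ t * exp (-t ^ 2))
  simp only [sq_abs] at hcomp
  calc ∫ t : ℝ, |t| * exp (-t ^ 2) = 2 * ∫ t in Set.Ioi (0 : ℝ), t ^ 1 * exp (-t ^ 2) := by
        simp only [hcomp, pow_one]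
    _ = 1 := by
        rw [integral_Ioi_pow_mul_exp_neg_sq]
        norm_num

variable {E : Type*} [NormedAddCommGroup E] [InnerProductSpace ℝ E] [FiniteDimensional ℝ E]

lemma exists_orthonormalBasis_apply_eq {u : E} (hu : ‖u‖ = 1) :
    ∃ (b : OrthonormalBasis (Fin (finrank ℝ E)) ℝ E) (i : Fin (finrank ℝ E)), b i = u := by
  have hE : Nontrivial E := ⟨u, 0, norm_ne_zero_iff.1 (by simp [hu])⟩
  let i : Fin (finrank ℝ E) := ⟨0, finrank_pos⟩
  obtain ⟨b, hb⟩ := Orthonormal.exists_orthonormalBasis_extension_of_card_eq (𝕜 := ℝ)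
    (ι := Fin (finrank ℝ E)) (by simp) (v := fun _ ↦ u) (s := {i})
    (by simpa [orthonormal_subsingleton_iff] using hu)
  exact ⟨b, i, hb i rfl⟩

variable [MeasurableSpace E] [BorelSpace E]

lemma integral_prod_inner_orthonormalBasis {ι 𝕜 : Type*} [Fintype ι] [RCLike 𝕜]
    (b : OrthonormalBasis ι ℝ E) (f : ι → ℝ → 𝕜) :
    ∫ v : E, ∏ i, f i (inner ℝ (b i) v) = ∏ i, ∫ t, f i t := by
  rw [← integral_fintype_prod_volume_eq_prod,
    ← (PiLp.volume_preserving_ofLp ι).integral_comp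
      (MeasurableEquiv.toLp 2 (ι → ℝ)).symm.measurableEmbedding,
    ← b.measurePreserving_repr.integral_comp b.repr.toHomeomorph.measurableEmbedding]
  simp only [b.repr_apply_apply]

lemma integral_abs_inner_mul_exp_neg_norm_sq {u : E} (hu : ‖u‖ = 1) :
    ∫ v : E, |inner ℝ u v| * exp (-‖v‖ ^ 2) = √π ^ (finrank ℝ E - 1) := by
  obtain ⟨b, i, rfl⟩ := exists_orthonormalBasis_apply_eq hu
  have hprod (v : E) : |inner ℝ (b i) v| * exp (-‖v‖ ^ 2) =
      ∏ j, (if j = i then |inner ℝ (b j) v| else 1) * exp (-inner ℝ (b j) v ^ 2) := by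
    rw [Finset.prod_mul_distrib, ← exp_sum, Finset.sum_neg_distrib, b.sum_sq_inner_right]
    simp
  have hfactor (j : Fin (finrank ℝ E)) :
      ∫ t : ℝ, (if j = i then |t| else 1) * exp (-t ^ 2) = if j = i then 1 else √π := by
    split_ifs
    · exact integral_abs_mul_exp_neg_sq
    · simpa using integral_gaussian 1
  simp only [hprod, integral_prod_inner_orthonormalBasis b fun j t ↦
    (if j = i then |t| else 1) * exp (-t ^ 2), hfactor]
  simp [Finset.prod_ite, Finset.filter_ne']

lemma toSphere_real_univ_eq_gamma [Nontrivial E] :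
    (volume : Measure E).toSphere.real Set.univ =
      2 * √π ^ finrank ℝ E / Gamma (finrank ℝ E / 2) := by
  have hdim : (0 : ℝ) < finrank ℝ E := mod_cast finrank_pos
  have : 0 < Gamma (finrank ℝ E / 2) := Gamma_pos_of_pos (by positivity)
  rw [toSphere_real_apply_univ, Measure.real, InnerProductSpace.volume_ball,
    Gamma_add_one (by positivity), ENNReal.ofReal_one, one_pow, one_mul,
    ENNReal.toReal_ofReal (by positivity)]
  field_simp

lemma integral_toSphere_abs_inner {u : E} (hu : ‖u‖ = 1) :
    ∫ n, |inner ℝ u (n : E)| ∂(volume : Measure E).toSphere =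
      2 * √π ^ (finrank ℝ E - 1) / Gamma ((finrank ℝ E + 1) / 2) := by
  have hE : Nontrivial E := ⟨u, 0, norm_ne_zero_iff.1 (by simp [hu])⟩
  have : 0 < Gamma ((finrank ℝ E + 1) / 2) := Gamma_pos_of_pos (by positivity)
  have hradial : ∫ r in Set.Ioi (0 : ℝ), r ^ (finrank ℝ E - 1) • (r * exp (-r ^ 2)) =
      Gamma ((finrank ℝ E + 1) / 2) / 2 := by
    simp only [smul_eq_mul, ← mul_assoc, pow_sub_one_mul (finrank_pos (R := ℝ) (M := E)).ne',
      integral_Ioi_pow_mul_exp_neg_sq]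
  have hpolar := integral_eq_integral_toSphere_mul (volume : Measure E)
    (F := fun v ↦ |inner ℝ u v| * exp (-‖v‖ ^ 2)) (a := fun n ↦ |inner ℝ u (n : E)|)
    (b := fun r ↦ r * exp (-r ^ 2)) fun n r hr ↦ by
      rw [inner_smul_right, abs_mul, norm_smul, norm_eq_of_mem_sphere, norm_of_nonneg hr.le,
        abs_of_pos hr]
      ring_nf
  rw [integral_abs_inner_mul_exp_neg_norm_sq hu, hradial] at hpolar
  rw [hpolar]
  field_simp

lemma average_toSphere_abs_inner {u : E} (hu : ‖u‖ = 1) :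
    ⨍ n, |inner ℝ u (n : E)| ∂(volume : Measure E).toSphere =
      Gamma (finrank ℝ E / 2) / (√π * Gamma ((finrank ℝ E + 1) / 2)) := by
  have hE : Nontrivial E := ⟨u, 0, norm_ne_zero_iff.1 (by simp [hu])⟩
  have hdim : (0 : ℝ) < finrank ℝ E := mod_cast finrank_pos
  have : 0 < Gamma (finrank ℝ E / 2) := Gamma_pos_of_pos (by positivity)
  rw [average_eq, toSphere_real_univ_eq_gamma, integral_toSphere_abs_inner hu, smul_eq_mul,
    ← pow_sub_one_mul (finrank_pos (R := ℝ) (M := E)).ne' √π]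
  field_simp

end PolarIntegrals

section FiniteAverages

open MeasureTheory Metric Module Real

lemma exists_stdSimplex_sum_lt_of_average_lt {X K : Type*} [MeasurableSpace X]
    [TopologicalSpace K] [CompactSpace K] {μ : Measure X} [IsFiniteMeasure μ] [NeZero μ]
    {F : X → C(K, ℝ)} (hF : Integrable F μ) {r : ℝ} (hr : ∀ u, ⨍ x, F x u ∂μ < r) :
    ∃ (m : ℕ) (c : Fin m → ℝ) (x : Fin m → X),
      c ∈ stdSimplex ℝ (Fin m) ∧ ∀ u, ∑ i, c i * F (x i) u < r := by
  have hmem : ⨍ x, F x ∂μ ∈ closure (convexHull ℝ (Set.range F)) :=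
    (convex_convexHull ℝ _).closure.average_mem isClosed_closure
      (ae_of_all _ fun x ↦ subset_closure (subset_convexHull ℝ _ ⟨x, rfl⟩)) hF
  have hopen : IsOpen {g : C(K, ℝ) | Set.MapsTo g Set.univ (Set.Iio r)} :=
    ContinuousMap.isOpen_setOfPred_mapsTo isCompact_univ isOpen_Iio
  have hlt : Set.MapsTo (⨍ x, F x ∂μ : C(K, ℝ)) Set.univ (Set.Iio r) := fun u _ ↦ by
    have := hr u
    rw [average_eq] at this
    rwa [Set.mem_Iio, average_eq, ContinuousMap.smul_apply, ContinuousMap.integral_apply hF]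
  obtain ⟨g, hgr, hg⟩ := mem_closure_iff.1 hmem _ hopen hlt
  obtain ⟨ι, _, c, z, hc0, hc1, hz, rfl⟩ := mem_convexHull_iff_exists_fintype.1 hg
  choose x hx using hz
  let e := (Fintype.equivFin ι).symm
  refine ⟨Fintype.card ι, c ∘ e, x ∘ e, ⟨fun i ↦ hc0 _, (e.sum_comp c).trans hc1⟩, fun u ↦ ?_⟩
  calc ∑ i, (c ∘ e) i * F ((x ∘ e) i) u = ∑ i, c i * F (x i) u :=
        e.sum_comp fun i ↦ c i * F (x i) u
    _ < r := by simpa [hx] using hgr (Set.mem_univ u)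

variable {E : Type*} [NormedAddCommGroup E] [InnerProductSpace ℝ E] [FiniteDimensional ℝ E]

lemma exists_stdSimplex_sum_abs_inner_le [Nontrivial E] {r : ℝ}
    (hr : Gamma (finrank ℝ E / 2) / (√π * Gamma ((finrank ℝ E + 1) / 2)) < r) :
    ∃ (m : ℕ) (c : Fin m → ℝ) (n : Fin m → sphere (0 : E) 1),
      c ∈ stdSimplex ℝ (Fin m) ∧ ∀ u : E, ∑ i, c i * |inner ℝ u (n i : E)| ≤ r * ‖u‖ := by
  borelize E
  let F : C(sphere (0 : E) 1, C(sphere (0 : E) 1, ℝ)) :=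
    ContinuousMap.curry ⟨fun x ↦ |inner ℝ (x.2 : E) (x.1 : E)|, by fun_prop⟩
  have : NeZero (volume : Measure E).toSphere := ⟨Measure.toSphere_ne_zero _⟩
  have hF : Integrable F (volume : Measure E).toSphere :=
    F.continuous.integrable_of_hasCompactSupport (.of_compactSpace _)
  obtain ⟨m, c, n, hc, hlt⟩ := exists_stdSimplex_sum_lt_of_average_lt hF (r := r) fun u ↦
    (average_toSphere_abs_inner (norm_eq_of_mem_sphere u)).trans_lt hr
  refine ⟨m, c, n, hc, fun u ↦ ?_⟩
  obtain rfl | hu := eq_or_ne u 0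
  · simp
  have hscale (i : Fin m) : |inner ℝ u (n i : E)| = ‖u‖ * |inner ℝ (‖u‖⁻¹ • u) (n i : E)| := by
    rw [inner_smul_left, abs_mul]
    simp [hu]
  calc ∑ i, c i * |inner ℝ u (n i : E)|
      = (∑ i, c i * |inner ℝ (‖u‖⁻¹ • u) (n i : E)|) * ‖u‖ := by
        simp only [hscale, Finset.sum_mul]
        exact Finset.sum_congr rfl fun i _ ↦ by ring
    _ ≤ r * ‖u‖ := by
        gcongr
        exact (hlt ⟨‖u‖⁻¹ • u, by simp [norm_smul, hu]⟩).le

lemma exists_stdSimplex_sum_abs_inner_le_of_finrank_eq_three (hE : finrank ℝ E = 3) {r : ℝ}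
    (hr : 1 / 2 < r) :
    ∃ (m : ℕ) (c : Fin m → ℝ) (n : Fin m → sphere (0 : E) 1),
      c ∈ stdSimplex ℝ (Fin m) ∧ ∀ u : E, ∑ i, c i * |inner ℝ u (n i : E)| ≤ r * ‖u‖ := by
  have : Nontrivial E := nontrivial_of_finrank_eq_succ hE
  have hΓ : Gamma (3 / 2) = √π / 2 := by
    rw [show (3 / 2 : ℝ) = (1 : ℕ) + 1 / 2 by norm_num, Gamma_nat_add_half]
    simp
  refine exists_stdSimplex_sum_abs_inner_le (lt_of_eq_of_lt ?_ hr)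
  rw [hE, Nat.cast_ofNat, hΓ, show ((3 : ℝ) + 1) / 2 = 2 by norm_num, Gamma_two]
  field_simp

end FiniteAverages

section BlochVectors

open Matrix

/-- The Pauli matrices `σ_x`, `σ_y`, `σ_z`. -/
def pauli : Fin 3 → Matrix (Fin 2) (Fin 2) ℂ :=
  ![!![0, 1; 1, 0], !![0, -Complex.I; Complex.I, 0], !![1, 0; 0, -1]]

/-- The Bloch vector `(Re tr (σ_j M))_j` of a `2 × 2` matrix, as a real-linear map. It is normalized
so that rank-one projections have Bloch vectors of norm `1`. -/
noncomputable def blochVector :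
    Matrix (Fin 2) (Fin 2) ℂ →ₗ[ℝ] EuclideanSpace ℝ (Fin 3) where
  toFun M := WithLp.toLp 2 fun j ↦ (pauli j * M).trace.re
  map_add' M N := by ext j; simp [mul_add]
  map_smul' t M := by ext j; simp

/-- The matrix `(1 + n · σ) / 2`, which for a unit vector `n` is the rank-one projection with Bloch
vector `n`. -/
noncomputable def blochProjection (n : EuclideanSpace ℝ (Fin 3)) : Matrix (Fin 2) (Fin 2) ℂ :=
  (1 / 2 : ℝ) • (1 + ∑ j, n j • pauli j)

lemma conjTranspose_pauli (j : Fin 3) : (pauli j)ᴴ = pauli j := by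
  ext i k
  fin_cases j <;> fin_cases i <;> fin_cases k <;> simp [pauli]

lemma trace_pauli (j : Fin 3) : (pauli j).trace = 0 := by
  fin_cases j <;> simp [pauli, trace_fin_two]

lemma trace_pauli_mul_pauli (i j : Fin 3) :
    (pauli i * pauli j).trace = if i = j then 2 else 0 := by
  fin_cases i <;> fin_cases j <;> norm_num [pauli, trace_fin_two, mul_apply]

lemma sum_smul_pauli_mul_self (n : EuclideanSpace ℝ (Fin 3)) :
    (∑ j, n j • pauli j) * (∑ j, n j • pauli j) = ‖n‖ ^ 2 • 1 := by
  rw [EuclideanSpace.real_norm_sq_eq]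
  ext i k
  fin_cases i <;> fin_cases k <;> apply Complex.ext <;>
    simp [pauli, mul_apply, Fin.sum_univ_three, pow_two] <;> ring

lemma blochVector_one : blochVector 1 = 0 := by
  ext j
  simp [blochVector, trace_pauli]

lemma blochVector_blochProjection (n : EuclideanSpace ℝ (Fin 3)) :
    blochVector (blochProjection n) = n := by
  ext j
  simp [blochVector, blochProjection, mul_add, Finset.mul_sum, trace_sum, trace_pauli,
    trace_pauli_mul_pauli]
  ring

lemma blochVector_noisy_blochProjection_sub (p : ℝ) (n : EuclideanSpace ℝ (Fin 3)) :
    blochVector ((p • blochProjection n + ((1 - p) / 2) • 1) -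
      (p • (1 - blochProjection n) + ((1 - p) / 2) • 1)) = (2 * p) • n := by
  simp only [map_sub, map_add, map_smul, blochVector_one, blochVector_blochProjection]
  module

lemma conjTranspose_blochProjection (n : EuclideanSpace ℝ (Fin 3)) :
    (blochProjection n)ᴴ = blochProjection n := by
  simp [blochProjection, conjTranspose_sum, conjTranspose_pauli]

lemma trace_blochProjection (n : EuclideanSpace ℝ (Fin 3)) : (blochProjection n).trace = 1 := by
  simp [blochProjection, trace_sum, trace_pauli]

lemma blochProjection_mul_self {n : EuclideanSpace ℝ (Fin 3)} (hn : ‖n‖ = 1) :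
    blochProjection n * blochProjection n = blochProjection n := by
  simp only [blochProjection, smul_mul_smul_comm, add_mul, mul_add, one_mul, mul_one,
    sum_smul_pauli_mul_self, hn]
  module

lemma norm_blochVector_sq {M : Matrix (Fin 2) (Fin 2) ℂ} (hM : M.IsHermitian) :
    ‖blochVector M‖ ^ 2 = M.trace.re ^ 2 - 4 * M.det.re := by
  have h10 : M 1 0 = star (M 0 1) := (hM.apply 1 0).symm
  have hdiag (i : Fin 2) : (M i i).im = 0 := Complex.conj_eq_iff_im.1 (hM.apply i i)
  rw [EuclideanSpace.norm_sq_eq]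
  simp [blochVector, pauli, trace_fin_two, mul_apply, det_fin_two, Fin.sum_univ_three, h10, hdiag]
  ring

lemma norm_blochVector_le_trace {M : Matrix (Fin 2) (Fin 2) ℂ} (hM : M.PosSemidef) :
    ‖blochVector M‖ ≤ M.trace.re := by
  refine le_of_sq_le_sq ?_ (Complex.le_def.1 hM.trace_nonneg).1
  have hdet : 0 ≤ M.det.re := (Complex.le_def.1 hM.det_nonneg).1
  linarith [norm_blochVector_sq hM.isHermitian]

end BlochVectors

section JointMeasurability

variable {d : ℕ} {Y : Type} [Fintype Y]

lemma JointlyMeasurable.exists_isPOVM_forall_le_sum_abs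
    {E : Fin 2 → Y → Matrix (Fin d) (Fin d) ℂ} (hE : JointlyMeasurable E) :
    ∃ (k : ℕ) (G : Fin k → Matrix (Fin d) (Fin d) ℂ), IsPOVM G ∧
      ∀ (y : Y) (f : Matrix (Fin d) (Fin d) ℂ →ₗ[ℝ] ℝ), f (E 0 y - E 1 y) ≤ ∑ l, |f (G l)| := by
  obtain ⟨k, G, q, hG, hq0, hq1, hEG⟩ := hE
  refine ⟨k, G, hG, fun y f ↦ ?_⟩
  have hdiff (l : Fin k) : |q 0 y l - q 1 y l| ≤ 1 := by
    have hsum := hq1 y l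
    rw [Fin.sum_univ_two] at hsum
    rw [abs_le]
    constructor <;> linarith [hq0 0 y l, hq0 1 y l]
  calc f (E 0 y - E 1 y) = ∑ l, (q 0 y l - q 1 y l) * f (G l) := by
        simp only [hEG, map_sub, map_sum, map_smul, smul_eq_mul, sub_mul, Finset.sum_sub_distrib]
    _ ≤ ∑ l, |f (G l)| := Finset.sum_le_sum fun l _ ↦
        (le_abs_self _).trans <| (abs_mul _ _).trans_le <|
          mul_le_of_le_one_left (abs_nonneg _) (hdiff l)

lemma JointlyMeasurable.sum_inner_blochVector_le
    {E : Fin 2 → Y → Matrix (Fin 2) (Fin 2) ℂ} (hE : JointlyMeasurable E)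
    {c : Y → ℝ} {n : Y → EuclideanSpace ℝ (Fin 3)} {r : ℝ} (hc : ∀ y, 0 ≤ c y) (hr : 0 ≤ r)
    (hn : ∀ u, ∑ y, c y * |inner ℝ u (n y)| ≤ r * ‖u‖) :
    ∑ y, c y * inner ℝ (blochVector (E 0 y - E 1 y)) (n y) ≤ 2 * r := by
  obtain ⟨k, G, ⟨hGpos, hGsum⟩, hG⟩ := hE.exists_isPOVM_forall_le_sum_abs
  have htrace : ∑ l, (G l).trace.re = 2 := by
    rw [← Complex.re_sum, ← Matrix.trace_sum, hGsum]
    simp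
  have hbound (y : Y) : inner ℝ (blochVector (E 0 y - E 1 y)) (n y) ≤
      ∑ l, |inner ℝ (blochVector (G l)) (n y)| := by
    simpa [real_inner_comm] using
      hG y ((innerₗ (EuclideanSpace ℝ (Fin 3)) (n y)).comp blochVector)
  calc ∑ y, c y * inner ℝ (blochVector (E 0 y - E 1 y)) (n y)
      ≤ ∑ y, c y * ∑ l, |inner ℝ (blochVector (G l)) (n y)| := by
        gcongr with y
        exacts [hc y, hbound y]
    _ = ∑ l, ∑ y, c y * |inner ℝ (blochVector (G l)) (n y)| := by
        simp only [Finset.mul_sum]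
        exact Finset.sum_comm
    _ ≤ ∑ l, r * (G l).trace.re := by
        gcongr with l
        exact (hn _).trans (mul_le_mul_of_nonneg_left (norm_blochVector_le_trace (hGpos l)) hr)
    _ = 2 * r := by rw [← Finset.mul_sum, htrace, mul_comm]

end JointMeasurability

/-- for `1/2 < p ≤ 1`, there is a finite family of rank-one projections
`P_y` on `ℂ²` whose noisy two-outcome POVMs
`E_{1|y} = p P_y + ((1-p)/2) 1`, `E_{2|y} = p (1 - P_y) + ((1-p)/2) 1`
are not jointly measurable. -/
theorem noisy_projective_incompatible_exists
    (p : ℝ) (hp0 : 1 / 2 < p) (hp1 : p ≤ 1) :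
    ∃ (nY : ℕ) (P : Fin nY → Matrix (Fin 2) (Fin 2) ℂ),
      (∀ y, (P y)ᴴ = P y ∧ P y * P y = P y ∧ (P y).trace = 1) ∧
      ¬ JointlyMeasurable (fun (b : Fin 2) (y : Fin nY) =>
        if b = 0 then p • P y + ((1 - p) / 2) • (1 : Matrix (Fin 2) (Fin 2) ℂ)
        else p • ((1 : Matrix (Fin 2) (Fin 2) ℂ) - P y)
          + ((1 - p) / 2) • (1 : Matrix (Fin 2) (Fin 2) ℂ)) := by
  obtain ⟨r, hr, hrp⟩ := exists_between hp0
  obtain ⟨m, c, n, ⟨hc0, hc1⟩, hn⟩ := exists_stdSimplex_sum_abs_inner_le_of_finrank_eq_three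
    (E := EuclideanSpace ℝ (Fin 3)) (by simp) hr
  have hunit (y : Fin m) : ‖(n y : EuclideanSpace ℝ (Fin 3))‖ = 1 := norm_eq_of_mem_sphere (n y)
  refine ⟨m, fun y ↦ blochProjection (n y), fun y ↦ ⟨conjTranspose_blochProjection _,
    blochProjection_mul_self (hunit y), trace_blochProjection _⟩, fun hE ↦ ?_⟩
  have hle := hE.sum_inner_blochVector_le hc0 (by linarith) hn
  simp only [reduceIte, one_ne_zero, blochVector_noisy_blochProjection_sub, real_inner_smul_left,
    real_inner_self_eq_norm_sq, hunit, ← Finset.sum_mul, hc1] at hle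
  linarith
end

section
/- Compatibility non-decreasing operations preserve joint measurability: let {E_{b|y}} be a jointly measurable family of POVMs on ℂ^d (settings y ∈ Y, outcomes b ∈ B, finite sets), and let a CNDO from (d, Y, B) to (d', Y', B') be given. Then the output family F_{b'|y'} = ∑_{a,k,y,b} p(y|y',a) q(b'|b,a,y',y) • K_{a,k}ᴴ * E_{b|y} * K_{a,k} is a jointly measurable family of POVMs on ℂ^{d'}. -/
open scoped BigOperators Matrix ComplexOrder Kronecker ComplexConjugate

/-!
A CNDO is a composition of three operations, each of which acts on a parent POVM `G` and its
response functions `r`. Post-processing the outcomes and randomizing the settings leave `G` alone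
and replace `r` by convex combinations of probability vectors. Pulling back along Kraus operators
`K i` replaces `G l` by `(K i)ᴴ * G l * K i`, indexed by the pairs `(i, l)`; as the parent's
outcome now records `i`, the response may use a setting that depends on `i`.
-/

namespace IsPOVM

variable {d d' : ℕ} {ι Λ : Type} [Fintype ι] [Fintype Λ] {G : Λ → Matrix (Fin d) (Fin d) ℂ}

theorem comp_equiv (hG : IsPOVM G) (e : ι ≃ Λ) : IsPOVM (G ∘ e) :=
  ⟨fun i => hG.1 (e i), (e.sum_comp G).trans hG.2⟩

theorem conjTranspose_mul_mul_same (hG : IsPOVM G) {K : ι → Matrix (Fin d) (Fin d') ℂ}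
    (hK : ∑ i, (K i)ᴴ * K i = 1) :
    IsPOVM fun x : ι × Λ => (K x.1)ᴴ * G x.2 * K x.1 := by
  refine ⟨fun x => (hG.1 x.2).conjTranspose_mul_mul_same (K x.1), ?_⟩
  simp only [Fintype.sum_prod_type, ← Matrix.sum_mul, ← Matrix.mul_sum, hG.2, Matrix.mul_one, hK]

end IsPOVM

namespace JointlyMeasurable

variable {d d' : ℕ} {B Y : Type} [Fintype B] [Fintype Y] {E : B → Y → Matrix (Fin d) (Fin d) ℂ}

theorem of_fintype {Λ : Type} [Fintype Λ] {G : Λ → Matrix (Fin d) (Fin d) ℂ} (hG : IsPOVM G)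
    {r : Y → Λ → B → ℝ} (hr : ∀ y l, r y l ∈ stdSimplex ℝ B)
    (hE : ∀ b y, E b y = ∑ l, r y l b • G l) : JointlyMeasurable E := by
  let e := (Fintype.equivFin Λ).symm
  refine ⟨Fintype.card Λ, G ∘ e, fun b y i => r y (e i) b, hG.comp_equiv e,
    fun b y i => (hr y (e i)).1 b, fun y i => (hr y (e i)).2, fun b y => ?_⟩
  exact (hE b y).trans (e.sum_comp fun l => r y l b • G l).symm

theorem exists_parent (h : JointlyMeasurable E) :
    ∃ (n : ℕ) (G : Fin n → Matrix (Fin d) (Fin d) ℂ) (r : Y → Fin n → B → ℝ),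
      IsPOVM G ∧ (∀ y l, r y l ∈ stdSimplex ℝ B) ∧ ∀ b y, E b y = ∑ l, r y l b • G l := by
  obtain ⟨n, G, p, hG, hp0, hp1, hE⟩ := h
  exact ⟨n, G, fun y l b => p b y l, hG, fun y l => ⟨fun b => hp0 b y l, hp1 y l⟩, hE⟩

theorem isPOVM (h : JointlyMeasurable E) (y : Y) : IsPOVM fun b => E b y := by
  obtain ⟨n, G, r, hG, hr, hE⟩ := h.exists_parent
  simp only [hE]
  refine ⟨fun b => Matrix.posSemidef_sum _ fun l _ => (hG.1 l).smul ((hr y l).1 b), ?_⟩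
  calc ∑ b, ∑ l, r y l b • G l
      = ∑ l, (∑ b, r y l b) • G l := by rw [Finset.sum_comm]; simp only [Finset.sum_smul]
    _ = 1 := by simp only [(hr y _).2, one_smul, hG.2]

variable {Z : Type} [Fintype Z]

theorem postprocess {B' : Type} [Fintype B'] (h : JointlyMeasurable E) (s : Z → Y)
    {q : Z → B → B' → ℝ} (hq : ∀ z b, q z b ∈ stdSimplex ℝ B') :
    JointlyMeasurable fun b' z => ∑ b, q z b b' • E b (s z) := by
  obtain ⟨n, G, r, hG, hr, hE⟩ := h.exists_parent
  refine of_fintype hG (r := fun z l => ∑ b, r (s z) l b • q z b) (fun z l => ?_) fun b' z => ?_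
  · exact (convex_stdSimplex ℝ B').sum_mem (fun b _ => (hr (s z) l).1 b) (hr (s z) l).2
      fun b _ => hq z b
  · simp only [hE, Finset.smul_sum, Finset.sum_apply, Pi.smul_apply, smul_eq_mul,
      Finset.sum_smul, smul_smul, mul_comm]
    exact Finset.sum_comm

theorem mix {ι : Type*} [Fintype ι] (h : JointlyMeasurable E) (s : Z → ι → Y)
    {p : Z → ι → ℝ} (hp : ∀ z, p z ∈ stdSimplex ℝ ι) :
    JointlyMeasurable fun b z => ∑ i, p z i • E b (s z i) := by
  obtain ⟨n, G, r, hG, hr, hE⟩ := h.exists_parent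
  refine of_fintype hG (r := fun z l => ∑ i, p z i • r (s z i) l) (fun z l => ?_) fun b z => ?_
  · exact (convex_stdSimplex ℝ B).sum_mem (fun i _ => (hp z).1 i) (hp z).2 fun i _ => hr (s z i) l
  · simp only [hE, Finset.smul_sum, Finset.sum_apply, Pi.smul_apply, smul_eq_mul,
      Finset.sum_smul, smul_smul]
    exact Finset.sum_comm

theorem sum_conjTranspose_mul_mul_same {ι : Type} [Fintype ι] (h : JointlyMeasurable E)
    (s : Z → ι → Y) {K : ι → Matrix (Fin d) (Fin d') ℂ} (hK : ∑ i, (K i)ᴴ * K i = 1) :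
    JointlyMeasurable fun b z => ∑ i, (K i)ᴴ * E b (s z i) * K i := by
  obtain ⟨n, G, r, hG, hr, hE⟩ := h.exists_parent
  refine of_fintype (hG.conjTranspose_mul_mul_same hK) (r := fun z x => r (s z x.1) x.2)
    (fun z x => hr (s z x.1) x.2) fun b z => ?_
  simp only [hE, Fintype.sum_prod_type, Matrix.mul_sum, Matrix.sum_mul, Matrix.mul_smul,
    Matrix.smul_mul]

end JointlyMeasurable

/-- compatibility non-decreasing operations preserve joint measurability.
The CNDO is given by Kraus operators `K a k : Matrix (Fin d) (Fin d') ℂ` with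
`∑ KᴴK = 1`, and classical processings `p y y' a` and `q b' b a y' y`. -/
theorem cndo_preserves_joint_measurability
    {d d' : ℕ} {B Y B' Y' A κ : Type}
    [Fintype B] [Fintype Y] [Fintype B'] [Fintype Y'] [Fintype A] [Fintype κ]
    (K : A → κ → Matrix (Fin d) (Fin d') ℂ)
    (hK : ∑ a, ∑ k, (K a k)ᴴ * K a k = 1)
    (p : Y → Y' → A → ℝ)
    (hp0 : ∀ y y' a, 0 ≤ p y y' a) (hp1 : ∀ y' a, ∑ y, p y y' a = 1)
    (q : B' → B → A → Y' → Y → ℝ)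
    (hq0 : ∀ b' b a y' y, 0 ≤ q b' b a y' y)
    (hq1 : ∀ b a y' y, ∑ b', q b' b a y' y = 1)
    (E : B → Y → Matrix (Fin d) (Fin d) ℂ)
    (hE : ∀ y, IsPOVM fun b => E b y)
    (hJM : JointlyMeasurable E) :
    (∀ y', IsPOVM fun b' =>
      ∑ a, ∑ k, ∑ y, ∑ b, (p y y' a * q b' b a y' y) • ((K a k)ᴴ * E b y * K a k)) ∧
    JointlyMeasurable (fun b' y' =>
      ∑ a, ∑ k, ∑ y, ∑ b, (p y y' a * q b' b a y' y) • ((K a k)ᴴ * E b y * K a k)) := by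
  have hpost : JointlyMeasurable fun b' (z : A × Y' × Y) =>
      ∑ b, q b' b z.1 z.2.1 z.2.2 • E b z.2.2 :=
    hJM.postprocess (fun z : A × Y' × Y => z.2.2) (q := fun z b b' => q b' b z.1 z.2.1 z.2.2)
      fun z b => ⟨fun b' => hq0 b' b z.1 z.2.1 z.2.2, hq1 b z.1 z.2.1 z.2.2⟩
  have hmix : JointlyMeasurable fun b' (z : A × Y') =>
      ∑ y, p y z.2 z.1 • ∑ b, q b' b z.1 z.2 y • E b y :=
    hpost.mix (fun (z : A × Y') y => (z.1, z.2, y)) (p := fun z y => p y z.2 z.1)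
      fun z => ⟨fun y => hp0 y z.2 z.1, hp1 z.2 z.1⟩
  have hout : JointlyMeasurable fun (b' : B') (y' : Y') => ∑ x : A × κ, (K x.1 x.2)ᴴ *
      (∑ y, p y y' x.1 • ∑ b, q b' b x.1 y' y • E b y) * K x.1 x.2 :=
    hmix.sum_conjTranspose_mul_mul_same (fun y' (x : A × κ) => (x.1, y'))
      (K := fun x => K x.1 x.2)
      (by simpa only [Fintype.sum_prod_type] using hK)
  simp only [Fintype.sum_prod_type, Finset.smul_sum, smul_smul, Matrix.mul_sum, Matrix.sum_mul,
    Matrix.mul_smul, Matrix.smul_mul] at hout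
  exact ⟨hout.isPOVM, hout⟩
end

section
/- Jointly measurable families of POVMs are free under CNDO: for every family of POVMs {E_{b|y}} on ℂ^d (settings Y, outcomes B, all finite and nonempty) and every jointly measurable family of POVMs {F_{b'|y'}} on ℂ^{d'} (settings Y', outcomes B'), there exists a compatibility non-decreasing operation from (d, Y, B) to (d', Y', B') whose output on input {E_{b|y}} equals {F_{b'|y'}}. -/
open scoped BigOperators Matrix ComplexOrder Kronecker ComplexConjugate

/-!
Measure the parent POVM `G` of `F`, ignore `E`, and post-process the outcome. If `G a = Mᴴ * M`,
the Kraus operators `|i⟩⟨k| M`, with `k` running over a basis, implement this measurement and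
prepare the fixed state `|i⟩`. A post-processing `r b' y' a` that looks at neither the setting nor
the outcome of `E` only sees the normalisation `∑ b, E b y = 1`, so the output is
`∑ a, r b' y' a • G a = F b' y'`.
-/

section KrausOperators

open Matrix

variable {m n : Type*} [Fintype m]

theorem sum_conjTranspose_single_mul_single {R : Type*} [Semiring R] [StarRing R]
    [Fintype n] [DecidableEq m] [DecidableEq n] (i : m) :
    ∑ k : n, (single i k (1 : R))ᴴ * single i k (1 : R) = (1 : Matrix n n R) := by
  simp only [conjTranspose_single, star_one, single_mul_single_same, mul_one, sum_single_one]

theorem exists_sum_conjTranspose_mul_self_eq {𝕜 : Type*} [RCLike 𝕜] [Nonempty m] [Fintype n]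
    {G : Matrix n n 𝕜} (hG : G.PosSemidef) :
    ∃ K : n → Matrix m n 𝕜, ∑ k, (K k)ᴴ * K k = G := by
  classical
  obtain ⟨M, hM⟩ : ∃ M : Matrix n n 𝕜, G = Mᴴ * M := by
    open scoped MatrixOrder in
    exact CStarAlgebra.nonneg_iff_eq_star_mul_self.mp hG.nonneg
  let i : m := Classical.arbitrary m
  refine ⟨fun k => single i k (1 : 𝕜) * M, ?_⟩
  calc ∑ k : n, (single i k (1 : 𝕜) * M)ᴴ * (single i k (1 : 𝕜) * M)
      = Mᴴ * (∑ k : n, (single i k (1 : 𝕜))ᴴ * single i k (1 : 𝕜)) * M := by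
        simp only [conjTranspose_mul, Matrix.mul_sum, Matrix.sum_mul, Matrix.mul_assoc]
    _ = G := by rw [sum_conjTranspose_single_mul_single, Matrix.mul_one, hM]

theorem sum_conjTranspose_mul_mul_same {R ι : Type*} [Semiring R] [StarRing R] [Fintype ι]
    [DecidableEq m] {E : ι → Matrix m m R} (hE : ∑ b, E b = 1) (K : Matrix m n R) :
    ∑ b, Kᴴ * E b * K = Kᴴ * K := by
  rw [← Matrix.sum_mul, ← Matrix.mul_sum, hE, Matrix.mul_one]

end KrausOperators

/-- A compatibility non-decreasing operation from `(d, Y, B)` to `(d', Y', B')`: an instrument with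
outcomes `a` and Kraus operators `K a k`, a choice `p y y' a` of the setting `y` given `y'` and
`a`, and a post-processing `q b' b a y' y` of the outcome `b`. The finite sets of values of `a` and
`k` are encoded as `Fin nA` and `Fin nk`. -/
structure CNDO (d d' : ℕ) (B Y B' Y' : Type*) [Fintype Y] [Fintype B'] where
  nA : ℕ
  nk : ℕ
  K : Fin nA → Fin nk → Matrix (Fin d) (Fin d') ℂ
  p : Y → Y' → Fin nA → ℝ
  q : B' → B → Fin nA → Y' → Y → ℝ
  sum_conjTranspose_mul_self : ∑ a, ∑ k, (K a k)ᴴ * K a k = 1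
  p_nonneg : ∀ y y' a, 0 ≤ p y y' a
  sum_p : ∀ y' a, ∑ y, p y y' a = 1
  q_nonneg : ∀ b' b a y' y, 0 ≤ q b' b a y' y
  sum_q : ∀ b a y' y, ∑ b', q b' b a y' y = 1

namespace CNDO

variable {d d' : ℕ} {B Y B' Y' : Type*} [Fintype B] [Fintype Y] [Fintype B']

/-- The output of a CNDO on the input family `E`, in the Heisenberg picture. -/
noncomputable def apply (C : CNDO d d' B Y B' Y') (E : B → Y → Matrix (Fin d) (Fin d) ℂ) :
    B' → Y' → Matrix (Fin d') (Fin d') ℂ := fun b' y' =>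
  ∑ a, ∑ k, ∑ y, ∑ b, (C.p y y' a * C.q b' b a y' y) • ((C.K a k)ᴴ * E b y * C.K a k)

theorem apply_eq_sum_smul_of_q_eq (C : CNDO d d' B Y B' Y') {r : B' → Y' → Fin C.nA → ℝ}
    (hq : ∀ b' b a y' y, C.q b' b a y' y = r b' y' a)
    {E : B → Y → Matrix (Fin d) (Fin d) ℂ} (hE : ∀ y, ∑ b, E b y = 1) (b' : B') (y' : Y') :
    C.apply E b' y' = ∑ a, r b' y' a • ∑ k, (C.K a k)ᴴ * C.K a k := by
  have hsum (a k) : ∑ y, ∑ b, (C.p y y' a * r b' y' a) • ((C.K a k)ᴴ * E b y * C.K a k) =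
      r b' y' a • ((C.K a k)ᴴ * C.K a k) := by
    simp only [← Finset.smul_sum, sum_conjTranspose_mul_mul_same (hE _)]
    rw [← Finset.sum_smul, ← Finset.sum_mul, C.sum_p, one_mul]
  simp only [apply, hq, hsum, Finset.smul_sum]

end CNDO

theorem jointly_measurable_free_under_cndo_general
    {d d' : ℕ} {B Y : Type*} {B' Y' : Type} [Fintype B] [Fintype Y] [Nonempty Y]
    [Fintype B'] [Fintype Y'] (hd : 0 < d)
    {F : B' → Y' → Matrix (Fin d') (Fin d') ℂ} (hF : JointlyMeasurable F) :
    ∃ C : CNDO d d' B Y B' Y', ∀ E : B → Y → Matrix (Fin d) (Fin d) ℂ,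
      (∀ y, ∑ b, E b y = 1) → C.apply E = F := by
  classical
  obtain ⟨n, G, r, ⟨hG_pos, hG_sum⟩, hr_nonneg, hr_sum, hF_eq⟩ := hF
  have : Nonempty (Fin d) := ⟨⟨0, hd⟩⟩
  choose K hK using fun a => exists_sum_conjTranspose_mul_self_eq (m := Fin d) (hG_pos a)
  let y₀ : Y := Classical.arbitrary Y
  let C : CNDO d d' B Y B' Y' :=
    { nA := n
      nk := d'
      K := K
      p := fun y _ _ => if y = y₀ then 1 else 0
      q := fun b' _ a y' _ => r b' y' a
      sum_conjTranspose_mul_self := by simp only [hK, hG_sum]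
      p_nonneg := fun _ _ _ => by positivity
      sum_p := fun _ _ => Fintype.sum_ite_eq' y₀ _
      q_nonneg := fun b' _ a y' _ => hr_nonneg b' y' a
      sum_q := fun _ a y' _ => hr_sum y' a }
  refine ⟨C, fun E hE => funext₂ fun b' y' => ?_⟩
  calc C.apply E b' y' = ∑ a, r b' y' a • ∑ k, (K a k)ᴴ * K a k :=
        C.apply_eq_sum_smul_of_q_eq (fun _ _ _ _ _ => rfl) hE b' y'
    _ = F b' y' := by simp only [hK, hF_eq]

/-- jointly measurable families are free under CNDO: any jointly measurable
family of POVMs `F` on `ℂ^{d'}` can be obtained from any family of POVMs `E` on `ℂ^d`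
by some compatibility non-decreasing operation. -/
theorem jointly_measurable_free_under_cndo
    {d d' : ℕ} {B Y B' Y' : Type}
    [Fintype B] [Fintype Y] [Nonempty B] [Nonempty Y]
    [Fintype B'] [Fintype Y'] (hd : 0 < d)
    (E : B → Y → Matrix (Fin d) (Fin d) ℂ)
    (hE : ∀ y, IsPOVM fun b => E b y)
    (F : B' → Y' → Matrix (Fin d') (Fin d') ℂ)
    (hF : ∀ y', IsPOVM fun b' => F b' y')
    (hJM : JointlyMeasurable F) :
    ∃ (nA nk : ℕ) (K : Fin nA → Fin nk → Matrix (Fin d) (Fin d') ℂ)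
      (p : Y → Y' → Fin nA → ℝ) (q : B' → B → Fin nA → Y' → Y → ℝ),
      (∑ a, ∑ k, (K a k)ᴴ * K a k = 1) ∧
      (∀ y y' a, 0 ≤ p y y' a) ∧ (∀ y' a, ∑ y, p y y' a = 1) ∧
      (∀ b' b a y' y, 0 ≤ q b' b a y' y) ∧ (∀ b a y' y, ∑ b', q b' b a y' y = 1) ∧
      (∀ b' y', F b' y'
        = ∑ a, ∑ k, ∑ y, ∑ b, (p y y' a * q b' b a y' y) • ((K a k)ᴴ * E b y * K a k)) := by
  obtain ⟨C, hC⟩ := jointly_measurable_free_under_cndo_general (B := B) (Y := Y) hd hJM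
  exact ⟨C.nA, C.nk, C.K, C.p, C.q, C.sum_conjTranspose_mul_self, C.p_nonneg, C.sum_p, C.q_nonneg,
    C.sum_q, fun b' y' => (congr_fun₂ (hC E fun y => (hE y).2) b' y').symm⟩
end

section
/- The incompatible weight is an incompatibility monotone: if a family of POVMs {F_{b'|y'}} on ℂ^{d'} is the output of some compatibility non-decreasing operation applied to a family of POVMs {E_{b|y}} on ℂ^d, then IW({F_{b'|y'}}) ≤ IW({E_{b|y}}). -/
open scoped BigOperators Matrix ComplexOrder Kronecker ComplexConjugate

/-- The incompatible weight of a family of POVMs: the least `ν ∈ [0,1]` such that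
`E = ν F + (1-ν) G` for some family of POVMs `F` and jointly measurable family of
POVMs `G`. -/
noncomputable def incompatibleWeight {d : ℕ} {B Y : Type} [Fintype B] [Fintype Y]
    (E : B → Y → Matrix (Fin d) (Fin d) ℂ) : ℝ :=
  sInf {ν : ℝ | 0 ≤ ν ∧ ν ≤ 1 ∧
    ∃ F G : B → Y → Matrix (Fin d) (Fin d) ℂ,
      (∀ y, IsPOVM fun b => F b y) ∧ (∀ y, IsPOVM fun b => G b y) ∧
      JointlyMeasurable G ∧
      (∀ b y, E b y = ν • F b y + (1 - ν) • G b y)}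

/-! A decomposition `E = ν F + (1 - ν) G` is carried by a CNDO, which is linear, to a decomposition
of its output with the same `ν`, provided a CNDO preserves POVMs and joint measurability.
Both follow from one construction: if `Φ` is an instrument and `M a` is a POVM for each outcome
`a`, then the operators `Φ a (M a c)`, indexed by `(a, c)`, again form a POVM. Post-processing it
for `M a (y, b) = p(y|y',a) E_{b|y}` yields the output POVM for setting `y'`. If `G` is a parent
POVM of `E`, then taking `M a = G` for every `a` gives a parent POVM of the whole output. -/

section Instrument

variable {m n A κ : Type*} [Fintype m] [Fintype A] [Fintype κ]

/-- The completely positive map `M ↦ ∑ₖ Kₖᴴ M Kₖ` with Kraus operators `K`, in the Heisenberg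
picture, regarded as a map over `ℝ` because classical mixing only uses real weights. -/
def krausMap (K : κ → Matrix m n ℂ) : Matrix m m ℂ →ₗ[ℝ] Matrix n n ℂ where
  toFun M := ∑ k, (K k)ᴴ * M * K k
  map_add' M N := by simp only [Matrix.mul_add, Matrix.add_mul, Finset.sum_add_distrib]
  map_smul' c M := by
    simp only [Matrix.mul_smul, Matrix.smul_mul, Finset.smul_sum, RingHom.id_apply]

/-- A quantum instrument in the Heisenberg picture, with the maps `Φ a` only required to be
positive rather than completely positive: preservation of total probability is unitality of
their sum. -/
structure IsPositiveInstrument [DecidableEq m] [DecidableEq n]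
    (Φ : A → Matrix m m ℂ →ₗ[ℝ] Matrix n n ℂ) : Prop where
  posSemidef_map : ∀ a {M}, M.PosSemidef → (Φ a M).PosSemidef
  sum_map_one : ∑ a, Φ a 1 = 1

theorem isPositiveInstrument_krausMap [Finite n] [DecidableEq m] [DecidableEq n]
    {K : A → κ → Matrix m n ℂ} (hK : ∑ a, ∑ k, (K a k)ᴴ * K a k = 1) :
    IsPositiveInstrument fun a => krausMap (K a) where
  posSemidef_map a _ hM :=
    Matrix.posSemidef_sum _ fun k _ => hM.conjTranspose_mul_mul_same (K a k)
  sum_map_one := by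
    simpa only [krausMap, LinearMap.coe_mk, AddHom.coe_mk, Matrix.mul_one] using hK

end Instrument

section POVM

variable {d d' : ℕ} {A B C Y Λ : Type}
  [Fintype A] [Fintype B] [Fintype C] [Fintype Y] [Fintype Λ]

theorem IsPOVM.instrument {Φ : A → Matrix (Fin d) (Fin d) ℂ →ₗ[ℝ] Matrix (Fin d') (Fin d') ℂ}
    (hΦ : IsPositiveInstrument Φ) {M : A → C → Matrix (Fin d) (Fin d) ℂ}
    (hM : ∀ a, IsPOVM (M a)) : IsPOVM fun x : A × C => Φ x.1 (M x.1 x.2) := by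
  refine ⟨fun x => hΦ.posSemidef_map x.1 ((hM x.1).1 x.2), ?_⟩
  simp only [Fintype.sum_prod_type, ← map_sum, (hM _).2, hΦ.sum_map_one]

theorem IsPOVM.randomize {E : Y → B → Matrix (Fin d) (Fin d) ℂ} (hE : ∀ y, IsPOVM (E y))
    {p : Y → ℝ} (hp : p ∈ stdSimplex ℝ Y) : IsPOVM fun x : Y × B => p x.1 • E x.1 x.2 := by
  refine ⟨fun x => ((hE x.1).1 x.2).smul (hp.1 x.1), ?_⟩
  simp only [Fintype.sum_prod_type, ← Finset.smul_sum, (hE _).2]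
  rw [← Finset.sum_smul, hp.2, one_smul]

theorem IsPOVM.postprocess {G : Λ → Matrix (Fin d) (Fin d) ℂ} (hG : IsPOVM G)
    {r : B → Λ → ℝ} (hr : ∀ l, (r · l) ∈ stdSimplex ℝ B) :
    IsPOVM fun b => ∑ l, r b l • G l := by
  refine ⟨fun b => Matrix.posSemidef_sum _ fun l _ => (hG.1 l).smul ((hr l).1 b), ?_⟩
  rw [Finset.sum_comm]
  simp only [← Finset.sum_smul, (hr _).2, one_smul, hG.2]

theorem jointlyMeasurable_postprocess {G : Λ → Matrix (Fin d) (Fin d) ℂ} (hG : IsPOVM G)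
    {r : B → Y → Λ → ℝ} (hr : ∀ y l, (r · y l) ∈ stdSimplex ℝ B) :
    JointlyMeasurable fun b y => ∑ l, r b y l • G l := by
  let e := (Fintype.equivFin Λ).symm
  exact ⟨Fintype.card Λ, G ∘ e, fun b y i => r b y (e i),
    ⟨fun i => hG.1 (e i), (e.sum_comp G).trans hG.2⟩,
    fun b y i => (hr y (e i)).1 b, fun y i => (hr y (e i)).2,
    fun b y => (e.sum_comp fun l => r b y l • G l).symm⟩

theorem IsPOVM.jointlyMeasurable_const {E : B → Matrix (Fin d) (Fin d) ℂ} (hE : IsPOVM E) :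
    JointlyMeasurable fun b (_ : Y) => E b := by
  classical
  simpa [Pi.single_apply] using
    jointlyMeasurable_postprocess (Y := Y) hE
      (r := fun b _ l => Pi.single (M := fun _ => ℝ) l 1 b) fun _ => single_mem_stdSimplex ℝ

theorem jointlyMeasurable_of_isEmpty [IsEmpty Y] (E : B → Y → Matrix (Fin d) (Fin d) ℂ) :
    JointlyMeasurable E :=
  ⟨1, fun _ => 1, fun _ _ _ => 1, ⟨fun _ => .one, Fin.sum_univ_one _⟩,
    fun _ _ _ => zero_le_one, isEmptyElim, fun _ => isEmptyElim⟩

theorem exists_jointlyMeasurable_isPOVM {E : B → Y → Matrix (Fin d) (Fin d) ℂ}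
    (hE : ∀ y, IsPOVM (E · y)) :
    ∃ G : B → Y → Matrix (Fin d) (Fin d) ℂ, (∀ y, IsPOVM (G · y)) ∧ JointlyMeasurable G := by
  rcases isEmpty_or_nonempty Y with _ | ⟨⟨y₀⟩⟩
  · exact ⟨E, hE, jointlyMeasurable_of_isEmpty E⟩
  · exact ⟨fun b _ => E b y₀, fun _ => hE y₀, (hE y₀).jointlyMeasurable_const⟩

theorem incompatibleWeight_map_le {B' Y' : Type} [Fintype B'] [Fintype Y']
    (T : (B → Y → Matrix (Fin d) (Fin d) ℂ) →ₗ[ℝ] (B' → Y' → Matrix (Fin d') (Fin d') ℂ))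
    (hPOVM : ∀ D, (∀ y, IsPOVM (D · y)) → ∀ y', IsPOVM (T D · y'))
    (hJM : ∀ D, JointlyMeasurable D → JointlyMeasurable (T D))
    {E : B → Y → Matrix (Fin d) (Fin d) ℂ} (hE : ∀ y, IsPOVM (E · y)) :
    incompatibleWeight (T E) ≤ incompatibleWeight E := by
  obtain ⟨G₀, hG₀, hG₀JM⟩ := exists_jointlyMeasurable_isPOVM hE
  refine csInf_le_csInf ⟨0, fun ν hν => hν.1⟩
    ⟨1, zero_le_one, le_rfl, E, G₀, hE, hG₀, hG₀JM, by simp⟩ ?_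
  rintro ν ⟨hν0, hν1, F, G, hF, hG, hGJM, hdecomp⟩
  obtain rfl : E = ν • F + (1 - ν) • G := funext₂ hdecomp
  exact ⟨hν0, hν1, T F, T G, hPOVM F hF, hPOVM G hG, hJM G hGJM, fun b' y' => by simp⟩

end POVM

section CNDO

variable {d d' : ℕ} {A B Y B' Y' : Type} [Fintype A] [Fintype B] [Fintype Y]

/-- The compatibility non-decreasing operation that, given setting `y'`, applies the instrument
`Φ` with outcome `a`, draws the setting `y` from `p(y|y',a)`, measures `b`, and draws the
output `b'` from `q(b'|b,a,y',y)`; the arguments of `p` and `q` follow the order of this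
notation. -/
noncomputable def cndo (Φ : A → Matrix (Fin d) (Fin d) ℂ →ₗ[ℝ] Matrix (Fin d') (Fin d') ℂ)
    (p : Y → Y' → A → ℝ) (q : B' → B → A → Y' → Y → ℝ) :
    (B → Y → Matrix (Fin d) (Fin d) ℂ) →ₗ[ℝ] (B' → Y' → Matrix (Fin d') (Fin d') ℂ) where
  toFun E b' y' := ∑ a, ∑ y, ∑ b, (p y y' a * q b' b a y' y) • Φ a (E b y)
  map_add' E F := by
    ext1 b'; ext1 y'
    simp only [Pi.add_apply, map_add, smul_add, Finset.sum_add_distrib]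
  map_smul' c E := by
    ext1 b'; ext1 y'
    simp only [Pi.smul_apply, map_smul, smul_comm _ c, Finset.smul_sum, RingHom.id_apply]

variable {Φ : A → Matrix (Fin d) (Fin d) ℂ →ₗ[ℝ] Matrix (Fin d') (Fin d') ℂ}
  {p : Y → Y' → A → ℝ} {q : B' → B → A → Y' → Y → ℝ} {E : B → Y → Matrix (Fin d) (Fin d) ℂ}

theorem cndo_krausMap {κ : Type*} [Fintype κ] (K : A → κ → Matrix (Fin d) (Fin d') ℂ)
    (b' : B') (y' : Y') :
    cndo (fun a => krausMap (K a)) p q E b' y' =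
      ∑ a, ∑ k, ∑ y, ∑ b, (p y y' a * q b' b a y' y) • ((K a k)ᴴ * E b y * K a k) := by
  refine Finset.sum_congr rfl fun a _ => ?_
  simp only [krausMap, LinearMap.coe_mk, AddHom.coe_mk, Finset.smul_sum]
  rw [Finset.sum_comm_cycle]

variable [Fintype B']

theorem isPOVM_cndo (hΦ : IsPositiveInstrument Φ)
    (hp : ∀ y' a, (p · y' a) ∈ stdSimplex ℝ Y)
    (hq : ∀ b a y' y, (q · b a y' y) ∈ stdSimplex ℝ B')
    (hE : ∀ y, IsPOVM (E · y)) (y' : Y') : IsPOVM (cndo Φ p q E · y') := by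
  have hM (a : A) : IsPOVM fun x : Y × B => p x.1 y' a • E x.2 x.1 := .randomize hE (hp y' a)
  convert (IsPOVM.instrument hΦ hM).postprocess
    (r := fun b' x => q b' x.2.2 x.1 y' x.2.1) fun x => hq x.2.2 x.1 y' x.2.1 using 2 with b'
  simp only [cndo, LinearMap.coe_mk, AddHom.coe_mk, Fintype.sum_prod_type, map_smul, smul_smul,
    mul_comm (p _ _ _)]

variable [Fintype Y']

theorem jointlyMeasurable_cndo (hΦ : IsPositiveInstrument Φ)
    (hp : ∀ y' a, (p · y' a) ∈ stdSimplex ℝ Y)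
    (hq : ∀ b a y' y, (q · b a y' y) ∈ stdSimplex ℝ B')
    (hE : JointlyMeasurable E) : JointlyMeasurable (cndo Φ p q E) := by
  obtain ⟨N, G, s, hG, hs0, hs1, hEG⟩ := hE
  let r (y' : Y') (x : A × Fin N) : B' → ℝ :=
    ∑ y, p y y' x.1 • ∑ b, s b y x.2 • (q · b x.1 y' y)
  have hr (y' x) : r y' x ∈ stdSimplex ℝ B' :=
    (convex_stdSimplex ℝ B').sum_mem (fun y _ => (hp y' x.1).1 y) (hp y' x.1).2 fun y _ =>
      (convex_stdSimplex ℝ B').sum_mem (fun b _ => hs0 b y x.2) (hs1 y x.2) fun b _ =>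
        hq b x.1 y' y
  have hparent : cndo Φ p q E = fun b' y' => ∑ x : A × Fin N, r y' x b' • Φ x.1 (G x.2) := by
    ext1 b'; ext1 y'
    calc ∑ a, ∑ y, ∑ b, (p y y' a * q b' b a y' y) • Φ a (E b y)
        = ∑ a, ∑ y, ∑ b, ∑ l, (p y y' a * (s b y l * q b' b a y' y)) • Φ a (G l) := by
          simp only [hEG, map_sum, map_smul, Finset.smul_sum, smul_smul, mul_assoc,
            mul_comm (q _ _ _ _ _)]
      _ = ∑ a, ∑ l, ∑ y, ∑ b, (p y y' a * (s b y l * q b' b a y' y)) • Φ a (G l) := by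
          exact Finset.sum_congr rfl fun a _ => Finset.sum_comm_cycle
      _ = ∑ x : A × Fin N, r y' x b' • Φ x.1 (G x.2) := by
          simp only [r, Fintype.sum_prod_type, Finset.sum_apply, Pi.smul_apply, smul_eq_mul,
            Finset.mul_sum, Finset.sum_smul]
  rw [hparent]
  exact jointlyMeasurable_postprocess (IsPOVM.instrument hΦ fun _ => hG) hr

theorem incompatibleWeight_monotone_under_cndo_general (hΦ : IsPositiveInstrument Φ)
    (hp : ∀ y' a, (p · y' a) ∈ stdSimplex ℝ Y)
    (hq : ∀ b a y' y, (q · b a y' y) ∈ stdSimplex ℝ B')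
    (hE : ∀ y, IsPOVM (E · y)) :
    incompatibleWeight (cndo Φ p q E) ≤ incompatibleWeight E :=
  incompatibleWeight_map_le (cndo Φ p q) (fun _ => isPOVM_cndo hΦ hp hq)
    (fun _ => jointlyMeasurable_cndo hΦ hp hq) hE

end CNDO

/-- the incompatible weight is an incompatibility monotone: it does not
increase under compatibility non-decreasing operations. -/
theorem incompatibleWeight_monotone_under_cndo
    {d d' : ℕ} {B Y B' Y' A κ : Type}
    [Fintype B] [Fintype Y] [Fintype B'] [Fintype Y'] [Fintype A] [Fintype κ]
    (K : A → κ → Matrix (Fin d) (Fin d') ℂ)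
    (hK : ∑ a, ∑ k, (K a k)ᴴ * K a k = 1)
    (p : Y → Y' → A → ℝ)
    (hp0 : ∀ y y' a, 0 ≤ p y y' a) (hp1 : ∀ y' a, ∑ y, p y y' a = 1)
    (q : B' → B → A → Y' → Y → ℝ)
    (hq0 : ∀ b' b a y' y, 0 ≤ q b' b a y' y)
    (hq1 : ∀ b a y' y, ∑ b', q b' b a y' y = 1)
    (E : B → Y → Matrix (Fin d) (Fin d) ℂ)
    (hE : ∀ y, IsPOVM fun b => E b y)
    (F : B' → Y' → Matrix (Fin d') (Fin d') ℂ)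
    (hF : ∀ b' y', F b' y'
      = ∑ a, ∑ k, ∑ y, ∑ b, (p y y' a * q b' b a y' y) • ((K a k)ᴴ * E b y * K a k)) :
    incompatibleWeight F ≤ incompatibleWeight E := by
  obtain rfl : F = cndo (fun a => krausMap (K a)) p q E :=
    funext₂ fun b' y' => (hF b' y').trans (cndo_krausMap K b' y').symm
  exact incompatibleWeight_monotone_under_cndo_general (isPositiveInstrument_krausMap hK)
    (fun y' a => ⟨(hp0 · y' a), hp1 y' a⟩) (fun b a y' y => ⟨(hq0 · b a y' y), hq1 b a y' y⟩) hE
end
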